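/- An element (λ, s) with λ = (λ₁ ≥ … ≥ λ₆) ∈ ℝ⁶ and s = (s₁ ≥ s₂ ≥ s₃ ≥ 0) ∈ ℝ³ belongs to A(3,3) if and only if the following thirteen inequalities hold: λ₁ − λ₆ ≥ 2s₁; λ₂ − λ₆ ≥ 2s₂; λ₁ − λ₅ ≥ 2s₂; λ₁ − λ₄ ≥ 2s₃; λ₂ − λ₅ ≥ 2s₃; λ₃ − λ₆ ≥ 2s₃; λ₁ + λ₂ − λ₅ − λ₆ ≥ 2(s₁+s₂); λ₁ + λ₂ − λ₄ − λ₆ ≥ 2(s₁+s₃); λ₁ + λ₃ − λ₅ − λ₆ ≥ 2(s₁+s₃); λ₁ + λ₂ − λ₄ − λ₅ ≥ 2(s₂+s₃); λ₁ + λ₃ − λ₄ − λ₆ ≥ 2(s₂+s₃); λ₂ + λ₃ − λ₅ − λ₆ ≥ 2(s₂+s₃); λ₁ + λ₂ + λ₃ − λ₄ − λ₅ − λ₆ ≥ 2(s₁+s₂+s₃). -/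

import Mathlib

open Matrix

/-- Eigenvalues of a (Hermitian) complex matrix, listed in decreasing order. -/
noncomputable def eigVec {k : ℕ} (X : Matrix (Fin k) (Fin k) ℂ) (hX : X.IsHermitian) :
    Fin k → ℝ :=
  fun i => hX.eigenvalues (Tuple.sort hX.eigenvalues i.rev)

/-- The `i`-th (0-based) singular value of a rectangular complex matrix:
the square root of the `i`-th largest eigenvalue of `Y * Yᴴ` (and `0` for `i ≥ a`). -/
noncomputable def sval {a b : ℕ} (Y : Matrix (Fin a) (Fin b) ℂ) (i : ℕ) : ℝ :=
  if h : i < a then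
    Real.sqrt (eigVec (Y * Yᴴ) (Matrix.isHermitian_mul_conjTranspose_self Y) ⟨i, h⟩)
  else 0

/-- The Horn cone `Horn(k)`. -/
def Horn (k : ℕ) : Set ((Fin k → ℝ) × (Fin k → ℝ) × (Fin k → ℝ)) :=
  { v | ∃ (X Y : Matrix (Fin k) (Fin k) ℂ) (hX : X.IsHermitian) (hY : Y.IsHermitian),
      v.1 = eigVec X hX ∧ v.2.1 = eigVec Y hY ∧ v.2.2 = eigVec (X + Y) (hX.add hY) }

/-- The Littlewood–Richardson cone `LR(m,n)`. -/
def LRcone (m n : ℕ) : Set ((Fin (m + n) → ℝ) × (Fin m → ℝ) × (Fin n → ℝ)) :=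
  { v | ∃ (M : Matrix (Fin (m + n)) (Fin (m + n)) ℂ) (hM : M.IsHermitian),
      v.1 = eigVec M hM ∧
      v.2.1 = eigVec (M.submatrix (Fin.castAdd n) (Fin.castAdd n))
        (hM.submatrix (Fin.castAdd n)) ∧
      v.2.2 = eigVec (M.submatrix (Fin.natAdd m) (Fin.natAdd m))
        (hM.submatrix (Fin.natAdd m)) }

/-- Top-left `p × p` block. -/
def blockTL (p q : ℕ) (X : Matrix (Fin (p + q)) (Fin (p + q)) ℂ) : Matrix (Fin p) (Fin p) ℂ :=
  X.submatrix (Fin.castAdd q) (Fin.castAdd q)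

/-- Top-right `p × q` block. -/
def blockTR (p q : ℕ) (X : Matrix (Fin (p + q)) (Fin (p + q)) ℂ) : Matrix (Fin p) (Fin q) ℂ :=
  X.submatrix (Fin.castAdd q) (Fin.natAdd p)

/-- Bottom-left `q × p` block. -/
def blockBL (p q : ℕ) (X : Matrix (Fin (p + q)) (Fin (p + q)) ℂ) : Matrix (Fin q) (Fin p) ℂ :=
  X.submatrix (Fin.natAdd p) (Fin.castAdd q)

/-- Bottom-right `q × q` block. -/
def blockBR (p q : ℕ) (X : Matrix (Fin (p + q)) (Fin (p + q)) ℂ) : Matrix (Fin q) (Fin q) ℂ :=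
  X.submatrix (Fin.natAdd p) (Fin.natAdd p)

/-- `λ* = (−λ_k, …, −λ_1)`. -/
def starVec {k : ℕ} (x : Fin k → ℝ) : Fin k → ℝ := fun i => -x i.rev

/-- `ŝ^{p,q} = (s₁, …, s_q, 0, …, 0, −s_q, …, −s₁) ∈ ℝ^{p+q}` (with `p − q` middle zeros). -/
noncomputable def hatPQ (p q : ℕ) (s : Fin q → ℝ) : Fin (p + q) → ℝ :=
  fun i =>
    if h : (i : ℕ) < q then s ⟨i, h⟩
    else if h' : (i : ℕ) < p then 0
    else -s ⟨p + q - 1 - i, by have := i.isLt; omega⟩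

/-- The cone `A(p,q)`: pairs `(e(X), s(X₁₂))` for `X` Hermitian of size `p+q`. -/
def coneA (p q : ℕ) : Set ((Fin (p + q) → ℝ) × (Fin q → ℝ)) :=
  { v | ∃ (X : Matrix (Fin (p + q)) (Fin (p + q)) ℂ) (hX : X.IsHermitian),
      v.1 = eigVec X hX ∧ ∀ i : Fin q, v.2 i = sval (blockTR p q X) (i : ℕ) }

/-- The cone `S(p,q)`: triples `(s(X), s(X₁₂), s(X₂₁))`. -/
def coneS (p q : ℕ) : Set ((Fin (p + q) → ℝ) × (Fin q → ℝ) × (Fin q → ℝ)) :=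
  { v | ∃ X : Matrix (Fin (p + q)) (Fin (p + q)) ℂ,
      (∀ i : Fin (p + q), v.1 i = sval X (i : ℕ)) ∧
      (∀ i : Fin q, v.2.1 i = sval (blockTR p q X) (i : ℕ)) ∧
      (∀ i : Fin q, v.2.2 i = sval (blockBL p q X) (i : ℕ)) }

/-- The cone `T(p,q)`: triples `(s(X), s(X₁₁), s(X₂₂))`. -/
def coneT (p q : ℕ) : Set ((Fin (p + q) → ℝ) × (Fin p → ℝ) × (Fin q → ℝ)) :=
  { v | ∃ X : Matrix (Fin (p + q)) (Fin (p + q)) ℂ,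
      (∀ i : Fin (p + q), v.1 i = sval X (i : ℕ)) ∧
      (∀ i : Fin p, v.2.1 i = sval (blockTL p q X) (i : ℕ)) ∧
      (∀ i : Fin q, v.2.2 i = sval (blockBR p q X) (i : ℕ)) }

/-- `μ(A) = (a_r − r ≥ … ≥ a₂ − 2 ≥ a₁ − 1)` as a decreasing real vector, for
`A = {a₁ < … < a_r}` a subset of `[n]` (0-based indexing internally). -/
noncomputable def muVec {n r : ℕ} (A : Finset (Fin n)) (h : A.card = r) : Fin r → ℝ :=
  fun k => (((A.orderIsoOfFin h k.rev : Fin n) : ℕ) : ℝ) - ((k.rev : ℕ) : ℝ)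

/-- `A^o = {ℓ + 1 − a : a ∈ A}` inside `[ℓ]`. -/
def opp {n : ℕ} (A : Finset (Fin n)) : Finset (Fin n) := A.image Fin.rev

/-- `|s|_{K ∩ [q]}` where `K ⊆ [n]`, `s ∈ ℝ^q` and `[q]` is viewed inside `[n]`. -/
noncomputable def sumRestr {n q : ℕ} (s : Fin q → ℝ) (K : Finset (Fin n)) : ℝ :=
  ∑ i ∈ K, (if h : (i : ℕ) < q then s ⟨i, h⟩ else 0)

/-- The augmented matrix `Ŷ^{p,q} = [[0, Y], [Yᴴ, 0]]` of size `p + q`. -/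
def hatM (p q : ℕ) (Y : Matrix (Fin p) (Fin q) ℂ) : Matrix (Fin (p + q)) (Fin (p + q)) ℂ :=
  Matrix.reindex finSumFinEquiv finSumFinEquiv (Matrix.fromBlocks 0 Y Yᴴ 0)

/-
For `X = [A, B; Bᴴ, C]` take unitary matrices `U`, `V` whose columns are singular vectors of `B`.
The compressions `P`, `Q` of `X` to the columns of `(U, ±V) / √2` satisfy `P - Q = 2 diag s`, and
Cauchy interlacing gives `e_i(P) ≤ λ_i` and `e_i(Q) ≥ λ_{n+i}`, so the thirteen inequalities follow
from Weyl's inequalities for `P = 2 diag s + Q` and the trace identity.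

Conversely, if `c = 2s`, `q`, `p` are the spectra of `P - Q`, `Q`, `P`, then rotating `P ⊕ Q`
produces Hermitian matrices with the spectrum of `P ⊕ Q` and off-diagonal block `x • diag c` for
every `0 ≤ x ≤ 1/2`. Hence `s` may be scaled up until one of the inequalities is tight. If it is
not the last one, the problem splits into problems of sizes one and two. If it is the last one,
the remaining inequalities are Horn's inequalities for `p = c + q`. For distinct enough spectra
these are solved by `Q = q₁ - uuᵀ + vvᵀ` and `P = D - uuᵀ` with `u ⊥ v`, where the diagonal `D`
interlaces both `p` and `c + q₁`: such `D` with the right trace form a convex set, and `u ⊥ v` is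
reached there by the intermediate value theorem. The general case follows since the Horn cone is
closed.
-/

/-- The monic complex polynomial with the given real roots, counted with multiplicity. -/
noncomputable def polyOfRoots {ι : Type*} [Fintype ι] (l : ι → ℝ) : Polynomial ℂ :=
  ∏ i, (Polynomial.X - Polynomial.C (l i : ℂ))

lemma polyOfRoots_comp_equiv {ι κ : Type*} [Fintype ι] [Fintype κ] (l : ι → ℝ) (e : κ ≃ ι) :
    polyOfRoots (l ∘ e) = polyOfRoots l :=
  Equiv.prod_comp e fun i => Polynomial.X - Polynomial.C (l i : ℂ)

lemma charpoly_diagonal_ofReal {ι : Type*} [Fintype ι] [DecidableEq ι] (l : ι → ℝ) :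
    (diagonal fun i => (l i : ℂ)).charpoly = polyOfRoots l :=
  charpoly_diagonal _

lemma roots_polyOfRoots {ι : Type*} [Fintype ι] (l : ι → ℝ) :
    (polyOfRoots l).roots = (Finset.univ.val.map l).map Complex.ofReal := by
  rw [← Polynomial.roots_multiset_prod_X_sub_C (Multiset.map Complex.ofReal _), Multiset.map_map,
    Multiset.map_map]
  rfl

lemma trace_eq_sum_of_charpoly {ι κ : Type*} [Fintype ι] [Fintype κ] [DecidableEq κ]
    {M : Matrix κ κ ℂ} {l : ι → ℝ} (h : M.charpoly = polyOfRoots l) :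
    M.trace = ((∑ i, l i : ℝ) : ℂ) := by
  rw [trace_eq_sum_roots_charpoly, h, roots_polyOfRoots, Multiset.map_map, Complex.ofReal_sum]
  rfl

lemma eq_of_polyOfRoots_eq {k : ℕ} {f g : Fin k → ℝ} (hf : Antitone f) (hg : Antitone g)
    (h : polyOfRoots f = polyOfRoots g) : f = g := by
  have hroots := congrArg Polynomial.roots h
  rw [roots_polyOfRoots, roots_polyOfRoots] at hroots
  have hperm := Multiset.map_injective Complex.ofReal_injective hroots
  rw [Fin.univ_val_map, Fin.univ_val_map, Multiset.coe_eq_coe] at hperm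
  exact List.ofFn_injective (hperm.eq_of_sortedGE hf.sortedGE_ofFn hg.sortedGE_ofFn)

section EigVec

variable {k : ℕ} {X Y : Matrix (Fin k) (Fin k) ℂ}

lemma eigVec_antitone (hX : X.IsHermitian) : Antitone (eigVec X hX) := fun _ _ hij =>
  Tuple.monotone_sort hX.eigenvalues (Fin.rev_le_rev.mpr hij)

/-- The permutation listing the eigenvalues of `X` in decreasing order. -/
noncomputable def eigPerm (hX : X.IsHermitian) : Equiv.Perm (Fin k) :=
  Fin.revPerm.trans (Tuple.sort hX.eigenvalues)

lemma charpoly_eq_polyOfRoots_eigVec (hX : X.IsHermitian) :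
    X.charpoly = polyOfRoots (eigVec X hX) :=
  hX.charpoly_eq.trans (polyOfRoots_comp_equiv hX.eigenvalues (eigPerm hX)).symm

lemma eigVec_eq_of_charpoly (hX : X.IsHermitian) {l : Fin k → ℝ} (hl : Antitone l)
    (h : X.charpoly = polyOfRoots l) : eigVec X hX = l :=
  eq_of_polyOfRoots_eq (eigVec_antitone hX) hl (charpoly_eq_polyOfRoots_eigVec hX ▸ h)

lemma exists_unitary_eigVec (hX : X.IsHermitian) :
    ∃ U : Matrix (Fin k) (Fin k) ℂ, Uᴴ * U = 1 ∧
      X = U * diagonal (fun i => (eigVec X hX i : ℂ)) * Uᴴ := by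
  set V : Matrix (Fin k) (Fin k) ℂ := hX.eigenvectorUnitary.1
  have hV : Vᴴ * V = 1 := Unitary.coe_star_mul_self hX.eigenvectorUnitary
  have hXV : X = V * diagonal (RCLike.ofReal ∘ hX.eigenvalues) * Vᴴ := by
    conv_lhs => rw [hX.spectral_theorem, Unitary.conjStarAlgAut_apply]
    rfl
  have hd : diagonal (fun i => (eigVec X hX i : ℂ)) =
      (diagonal (RCLike.ofReal ∘ hX.eigenvalues)).submatrix (eigPerm hX) (eigPerm hX) := by
    rw [submatrix_diagonal_equiv]
    rfl
  refine ⟨V.submatrix id (eigPerm hX), ?_, ?_⟩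
  · rw [conjTranspose_submatrix, submatrix_mul _ _ _ id _ Function.bijective_id |>.symm, hV,
      submatrix_one_equiv]
  · rw [conjTranspose_submatrix, hd, submatrix_mul_equiv, submatrix_mul_equiv, ← hXV,
      submatrix_id_id]

lemma starVec_antitone {x : Fin k → ℝ} (hx : Antitone x) : Antitone (starVec x) :=
  fun _ _ hij => neg_le_neg (hx (Fin.rev_le_rev.mpr hij))

lemma eigVec_neg (hX : X.IsHermitian) : eigVec (-X) hX.neg = starVec (eigVec X hX) := by
  refine eigVec_eq_of_charpoly _ (starVec_antitone (eigVec_antitone hX)) ?_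
  obtain ⟨U, hU, hXU⟩ := exists_unitary_eigVec hX
  have hneg : -X = U * (diagonal fun i => ((-eigVec X hX i : ℝ) : ℂ)) * Uᴴ := by
    conv_lhs => rw [hXU]
    simp only [Complex.ofReal_neg, ← diagonal_neg, Matrix.mul_neg, Matrix.neg_mul]
  rw [hneg, charpoly_mul_comm, ← Matrix.mul_assoc, hU, Matrix.one_mul, charpoly_diagonal_ofReal]
  exact (polyOfRoots_comp_equiv (fun i => -eigVec X hX i) Fin.revPerm).symm

lemma mem_Horn_of_charpoly (hX : X.IsHermitian) (hY : Y.IsHermitian) {x y z : Fin k → ℝ}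
    (hx : Antitone x) (hy : Antitone y) (hz : Antitone z) (hXx : X.charpoly = polyOfRoots x)
    (hYy : Y.charpoly = polyOfRoots y) (hXYz : (X + Y).charpoly = polyOfRoots z) :
    (x, y, z) ∈ Horn k :=
  ⟨X, Y, hX, hY, (eigVec_eq_of_charpoly hX hx hXx).symm, (eigVec_eq_of_charpoly hY hy hYy).symm,
    (eigVec_eq_of_charpoly _ hz hXYz).symm⟩

lemma sum_eq_sum_add_sum_of_mem_Horn {x y z : Fin k → ℝ} (h : (x, y, z) ∈ Horn k) :
    ∑ i, z i = ∑ i, x i + ∑ i, y i := by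
  obtain ⟨X, Y, hX, hY, rfl, rfl, rfl⟩ := h
  have htrace {M : Matrix (Fin k) (Fin k) ℂ} (hM : M.IsHermitian) :
      ((∑ i, eigVec M hM i : ℝ) : ℂ) = M.trace :=
    (trace_eq_sum_of_charpoly (charpoly_eq_polyOfRoots_eigVec hM)).symm
  rw [← Complex.ofReal_inj, Complex.ofReal_add]
  simp only [htrace, trace_add]

end EigVec

section MinMax

lemma exists_ne_zero_mem_inf {K V : Type*} [DivisionRing K] [AddCommGroup V] [Module K V]
    [FiniteDimensional K V] {W₁ W₂ : Submodule K V}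
    (h : Module.finrank K V < Module.finrank K W₁ + Module.finrank K W₂) :
    ∃ x ∈ W₁ ⊓ W₂, x ≠ 0 := by
  refine Submodule.exists_mem_ne_zero_of_ne_bot fun hbot => ?_
  have hdim := Submodule.finrank_sup_add_finrank_inf_eq W₁ W₂
  rw [hbot, finrank_bot] at hdim
  have := (W₁ ⊔ W₂).finrank_le
  omega

lemma re_star_dotProduct_self {k : ℕ} (x : Fin k → ℂ) :
    (star x ⬝ᵥ x).re = ∑ i, Complex.normSq (x i) := by
  simp [dotProduct, Complex.normSq_apply]

lemma re_star_dotProduct_self_pos {k : ℕ} {x : Fin k → ℂ} (hx : x ≠ 0) :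
    0 < (star x ⬝ᵥ x).re := by
  obtain ⟨i, hi⟩ := Function.ne_iff.mp hx
  rw [re_star_dotProduct_self]
  exact Finset.sum_pos' (fun j _ => Complex.normSq_nonneg (x j))
    ⟨i, Finset.mem_univ i, Complex.normSq_pos.mpr hi⟩

lemma re_star_dotProduct_diagonal_mulVec {k : ℕ} (l : Fin k → ℝ) (y : Fin k → ℂ) :
    (star y ⬝ᵥ (diagonal fun i => (l i : ℂ)) *ᵥ y).re = ∑ i, l i * Complex.normSq (y i) := by
  simp only [dotProduct, mulVec_diagonal, Complex.re_sum]
  refine Finset.sum_congr rfl fun i _ => ?_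
  simp only [Pi.star_apply, RCLike.star_def, Complex.normSq_apply, Complex.mul_re, Complex.mul_im,
    Complex.conj_re, Complex.conj_im, Complex.ofReal_re, Complex.ofReal_im]
  ring

lemma star_dotProduct_conj_mulVec {m n : ℕ} (G : Matrix (Fin n) (Fin m) ℂ)
    (X : Matrix (Fin n) (Fin n) ℂ) (x : Fin m → ℂ) :
    star x ⬝ᵥ (Gᴴ * X * G) *ᵥ x = star (G *ᵥ x) ⬝ᵥ X *ᵥ (G *ᵥ x) := by
  rw [star_mulVec, ← dotProduct_mulVec, mulVec_mulVec, mulVec_mulVec, Matrix.mul_assoc]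

lemma star_mulVec_dotProduct_mulVec {m n : ℕ} {G : Matrix (Fin n) (Fin m) ℂ} (hG : Gᴴ * G = 1)
    (x : Fin m → ℂ) : star (G *ᵥ x) ⬝ᵥ (G *ᵥ x) = star x ⬝ᵥ x := by
  rw [star_mulVec, ← dotProduct_mulVec, mulVec_mulVec, hG, one_mulVec]

lemma exists_submodule_form_le_eigVec {k : ℕ} {X : Matrix (Fin k) (Fin k) ℂ} (hX : X.IsHermitian)
    (i : Fin k) : ∃ W : Submodule ℂ (Fin k → ℂ), k ≤ Module.finrank ℂ W + i ∧
      ∀ x ∈ W, (star x ⬝ᵥ X *ᵥ x).re ≤ eigVec X hX i * (star x ⬝ᵥ x).re := by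
  obtain ⟨U, hU, hXU⟩ := exists_unitary_eigVec hX
  have hU' : Uᴴᴴ * Uᴴ = 1 := by rw [conjTranspose_conjTranspose, mul_eq_one_comm.mp hU]
  let firstCoords : (Fin k → ℂ) →ₗ[ℂ] (Fin i → ℂ) :=
    (Uᴴ.submatrix (Fin.castLE i.isLt.le) id).mulVecLin
  refine ⟨firstCoords.ker, ?_, fun x hx => ?_⟩
  · have hrank := firstCoords.finrank_range_add_finrank_ker
    have hrange := firstCoords.range.finrank_le
    rw [Module.finrank_fin_fun] at hrank hrange
    omega
  · have hform : star x ⬝ᵥ X *ᵥ x =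
        star (Uᴴ *ᵥ x) ⬝ᵥ (diagonal fun j => (eigVec X hX j : ℂ)) *ᵥ (Uᴴ *ᵥ x) := by
      rw [← star_dotProduct_conj_mulVec, conjTranspose_conjTranspose, ← hXU]
    rw [hform, ← star_mulVec_dotProduct_mulVec hU' x, re_star_dotProduct_diagonal_mulVec,
      re_star_dotProduct_self, Finset.mul_sum]
    refine Finset.sum_le_sum fun j _ => ?_
    rcases lt_or_ge j i with hji | hij
    · have hzero : (Uᴴ *ᵥ x) j = 0 := congrFun hx (⟨j, hji⟩ : Fin i)
      simp [hzero]
    · exact mul_le_mul_of_nonneg_right (eigVec_antitone hX hij) (Complex.normSq_nonneg _)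

lemma exists_submodule_eigVec_le_form {k : ℕ} {X : Matrix (Fin k) (Fin k) ℂ} (hX : X.IsHermitian)
    (i : Fin k) : ∃ W : Submodule ℂ (Fin k → ℂ), i < Module.finrank ℂ W ∧
      ∀ x ∈ W, eigVec X hX i * (star x ⬝ᵥ x).re ≤ (star x ⬝ᵥ X *ᵥ x).re := by
  obtain ⟨W, hdim, hW⟩ := exists_submodule_form_le_eigVec hX.neg i.rev
  refine ⟨W, ?_, fun x hx => ?_⟩
  · rw [Fin.val_rev] at hdim
    omega
  · have := hW x hx
    rw [eigVec_neg hX, starVec, Fin.rev_rev, neg_mulVec, dotProduct_neg, Complex.neg_re] at this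
    linarith

lemma cauchy_eigVec_compression_le {m n : ℕ} {X : Matrix (Fin n) (Fin n) ℂ} (hX : X.IsHermitian)
    {G : Matrix (Fin n) (Fin m) ℂ} (hG : Gᴴ * G = 1) {i : Fin m} {j : Fin n}
    (hij : (j : ℕ) ≤ i) :
    eigVec (Gᴴ * X * G) (isHermitian_conjTranspose_mul_mul G hX) i ≤ eigVec X hX j := by
  obtain ⟨W₁, hdim₁, hW₁⟩ :=
    exists_submodule_eigVec_le_form (isHermitian_conjTranspose_mul_mul G hX) i
  obtain ⟨W₂, hdim₂, hW₂⟩ := exists_submodule_form_le_eigVec hX j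
  have hinj : Function.Injective G.mulVecLin := fun x y hxy => by
    simpa [mulVec_mulVec, hG] using congrArg (Gᴴ *ᵥ ·) hxy
  obtain ⟨_, ⟨⟨x, hx, rfl⟩, hGx⟩, hne⟩ := exists_ne_zero_mem_inf
    (W₁ := W₁.map G.mulVecLin) (W₂ := W₂) (by
      rw [Module.finrank_fin_fun, ← (W₁.equivMapOfInjective _ hinj).finrank_eq]
      omega)
  have hx0 : x ≠ 0 := fun h => hne (by rw [h, map_zero])
  have hle := hW₂ _ hGx
  rw [mulVecLin_apply, ← star_dotProduct_conj_mulVec, star_mulVec_dotProduct_mulVec hG] at hle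
  exact le_of_mul_le_mul_right ((hW₁ x hx).trans hle) (re_star_dotProduct_self_pos hx0)

lemma cauchy_eigVec_le_compression {m n : ℕ} {X : Matrix (Fin n) (Fin n) ℂ} (hX : X.IsHermitian)
    {G : Matrix (Fin n) (Fin m) ℂ} (hG : Gᴴ * G = 1) {i : Fin m} {j : Fin n}
    (hij : (j.rev : ℕ) ≤ i.rev) :
    eigVec X hX j ≤ eigVec (Gᴴ * X * G) (isHermitian_conjTranspose_mul_mul G hX) i := by
  have h := cauchy_eigVec_compression_le hX.neg hG hij
  simp only [Matrix.mul_neg, Matrix.neg_mul] at h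
  rwa [eigVec_neg hX, eigVec_neg (isHermitian_conjTranspose_mul_mul G hX), starVec, starVec,
    Fin.rev_rev, Fin.rev_rev, neg_le_neg_iff] at h

lemma weyl_le_add_of_mem_Horn {k : ℕ} {x y z : Fin k → ℝ} (h : (x, y, z) ∈ Horn k) {i j m : Fin k}
    (hijm : (i : ℕ) + j ≤ m) : z m ≤ x i + y j := by
  obtain ⟨X, Y, hX, hY, rfl, rfl, rfl⟩ := h
  obtain ⟨W₁, hdim₁, hW₁⟩ := exists_submodule_form_le_eigVec hX i
  obtain ⟨W₂, hdim₂, hW₂⟩ := exists_submodule_form_le_eigVec hY j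
  obtain ⟨W₃, hdim₃, hW₃⟩ := exists_submodule_eigVec_le_form (hX.add hY) m
  have hdim := Submodule.finrank_sup_add_finrank_inf_eq W₁ W₂
  have hsup := (W₁ ⊔ W₂).finrank_le
  rw [Module.finrank_fin_fun] at hsup
  obtain ⟨v, ⟨⟨hv₁, hv₂⟩, hv₃⟩, hv0⟩ := exists_ne_zero_mem_inf (W₁ := W₁ ⊓ W₂) (W₂ := W₃) (by
    rw [Module.finrank_fin_fun]
    omega)
  refine le_of_mul_le_mul_right ?_ (re_star_dotProduct_self_pos hv0)
  have hv := hW₃ v hv₃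
  rw [add_mulVec, dotProduct_add, Complex.add_re] at hv
  linarith [hW₁ v hv₁, hW₂ v hv₂]

lemma starVec_mem_Horn {k : ℕ} {x y z : Fin k → ℝ} (h : (x, y, z) ∈ Horn k) :
    (starVec x, starVec y, starVec z) ∈ Horn k := by
  obtain ⟨X, Y, hX, hY, rfl, rfl, rfl⟩ := h
  refine ⟨-X, -Y, hX.neg, hY.neg, (eigVec_neg hX).symm, (eigVec_neg hY).symm, ?_⟩
  refine (eigVec_neg (hX.add hY)).symm.trans ?_
  congr 1
  exact neg_add X Y

lemma weyl_add_le_of_mem_Horn {k : ℕ} {x y z : Fin k → ℝ} (h : (x, y, z) ∈ Horn k) {i j m : Fin k}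
    (hijm : (i.rev : ℕ) + j.rev ≤ m.rev) : x i + y j ≤ z m := by
  have := weyl_le_add_of_mem_Horn (starVec_mem_Horn h) hijm
  simp only [starVec, Fin.rev_rev] at this
  linarith

end MinMax

section SingularValues

variable {k : ℕ}

open scoped ComplexOrder in
lemma eigVec_self_mul_conjTranspose_nonneg (B : Matrix (Fin k) (Fin k) ℂ) (i : Fin k) :
    0 ≤ eigVec (B * Bᴴ) (isHermitian_mul_conjTranspose_self B) i :=
  (posSemidef_self_mul_conjTranspose B).eigenvalues_nonneg _

lemma sval_eq_sqrt (B : Matrix (Fin k) (Fin k) ℂ) (i : Fin k) :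
    sval B i = √(eigVec (B * Bᴴ) (isHermitian_mul_conjTranspose_self B) i) :=
  dif_pos i.isLt

lemma sval_sq (B : Matrix (Fin k) (Fin k) ℂ) (i : Fin k) :
    sval B i ^ 2 = eigVec (B * Bᴴ) (isHermitian_mul_conjTranspose_self B) i := by
  rw [sval_eq_sqrt, Real.sq_sqrt (eigVec_self_mul_conjTranspose_nonneg B i)]

lemma sval_antitone (B : Matrix (Fin k) (Fin k) ℂ) : Antitone fun i : Fin k => sval B i := by
  simp only [sval_eq_sqrt]
  exact fun _ _ hij => Real.sqrt_le_sqrt (eigVec_antitone _ hij)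

lemma sval_diagonal {s : Fin k → ℝ} (hs : Antitone s) (hs0 : ∀ i, 0 ≤ s i) (i : Fin k) :
    sval (diagonal fun i => (s i : ℂ)) i = s i := by
  have hsq : Antitone fun i => s i ^ 2 := fun i j hij => pow_le_pow_left₀ (hs0 j) (hs hij) 2
  have hchar : ((diagonal fun i => (s i : ℂ)) * (diagonal fun i => (s i : ℂ))ᴴ).charpoly =
      polyOfRoots fun i => s i ^ 2 := by
    rw [← charpoly_diagonal_ofReal, diagonal_conjTranspose, diagonal_mul_diagonal]
    simp only [Pi.star_apply, RCLike.star_def, Complex.conj_ofReal, Complex.ofReal_mul, sq]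
  rw [sval_eq_sqrt, eigVec_eq_of_charpoly _ hsq hchar, Real.sqrt_sq (hs0 i)]

lemma inner_toLp_row {m n : Type*} [Fintype n] (M : Matrix m n ℂ) (i j : m) :
    inner ℂ (WithLp.toLp 2 (M i)) (WithLp.toLp 2 (M j)) = (M * Mᴴ) j i := by
  simp only [PiLp.inner_apply, RCLike.inner_apply, mul_apply, conjTranspose_apply, RCLike.star_def]

lemma orthonormal_normalized_rows {M : Matrix (Fin k) (Fin k) ℂ} {σ : Fin k → ℝ}
    (h : M * Mᴴ = diagonal fun i => ((σ i ^ 2 : ℝ) : ℂ)) :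
    Orthonormal ℂ ({i | σ i ≠ 0}.domRestrict fun i =>
      (σ i : ℂ)⁻¹ • (WithLp.toLp 2 (M i) : EuclideanSpace ℂ (Fin k))) := by
  rw [orthonormal_iff_ite]
  rintro ⟨i, hi⟩ ⟨j, hj⟩
  simp only [Set.domRestrict_apply, inner_smul_left, inner_smul_right, inner_toLp_row, h,
    diagonal_apply, Subtype.mk.injEq, eq_comm (a := j)]
  split_ifs with hij
  · subst hij
    have hσ : (σ i : ℂ) ≠ 0 := Complex.ofReal_ne_zero.mpr hi
    rw [map_inv₀, Complex.conj_ofReal, Complex.ofReal_pow]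
    field_simp
  · rw [mul_zero, mul_zero]

lemma exists_eq_diagonal_mul_unitary {M : Matrix (Fin k) (Fin k) ℂ} {σ : Fin k → ℝ}
    (h : M * Mᴴ = diagonal fun i => ((σ i ^ 2 : ℝ) : ℂ)) :
    ∃ W : Matrix (Fin k) (Fin k) ℂ, W * Wᴴ = 1 ∧ M = diagonal (fun i => (σ i : ℂ)) * W := by
  obtain ⟨b, hb⟩ :=
    (orthonormal_normalized_rows h).exists_orthonormalBasis_extension_of_card_eq (by simp)
  refine ⟨of fun i => (b i).ofLp, ?_, ?_⟩
  · ext i j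
    rw [← inner_toLp_row, one_apply]
    exact (orthonormal_iff_ite.mp b.orthonormal j i).trans (if_congr eq_comm rfl rfl)
  · ext i j
    rw [diagonal_mul, of_apply]
    by_cases hi : σ i = 0
    · have hrow : (WithLp.toLp 2 (M i) : EuclideanSpace ℂ (Fin k)) = 0 := by
        rw [← inner_self_eq_zero (𝕜 := ℂ), inner_toLp_row, h, diagonal_apply_eq, hi]
        norm_num
      rw [hi, Complex.ofReal_zero, zero_mul]
      exact congrFun (congrArg WithLp.ofLp hrow) j
    · rw [hb i hi]
      simp only [WithLp.ofLp_smul, Pi.smul_apply, smul_eq_mul]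
      rw [mul_inv_cancel_left₀ (Complex.ofReal_ne_zero.mpr hi)]

lemma exists_unitary_mul_mul_eq_diagonal_sval (B : Matrix (Fin k) (Fin k) ℂ) :
    ∃ U V : Matrix (Fin k) (Fin k) ℂ, Uᴴ * U = 1 ∧ Vᴴ * V = 1 ∧
      Uᴴ * B * V = diagonal fun i : Fin k => (sval B i : ℂ) := by
  obtain ⟨U, hU, hBU⟩ := exists_unitary_eigVec (isHermitian_mul_conjTranspose_self B)
  have hM : (Uᴴ * B) * (Uᴴ * B)ᴴ = diagonal fun i : Fin k => ((sval B i ^ 2 : ℝ) : ℂ) := by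
    simp only [sval_sq]
    calc (Uᴴ * B) * (Uᴴ * B)ᴴ = Uᴴ * (B * Bᴴ) * U := by
          simp only [conjTranspose_mul, conjTranspose_conjTranspose, Matrix.mul_assoc]
      _ = (Uᴴ * U) * diagonal (fun i => (eigVec (B * Bᴴ)
          (isHermitian_mul_conjTranspose_self B) i : ℂ)) * (Uᴴ * U) := by
        conv_lhs => rw [hBU]
        simp only [Matrix.mul_assoc]
      _ = _ := by rw [hU, Matrix.one_mul, Matrix.mul_one]
  obtain ⟨W, hW, hBW⟩ := exists_eq_diagonal_mul_unitary hM
  refine ⟨U, Wᴴ, hU, by rwa [conjTranspose_conjTranspose], ?_⟩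
  rw [hBW, Matrix.mul_assoc, hW, Matrix.mul_one]

end SingularValues

section Compressions

lemma eq_submatrix_fromBlocks {p q : ℕ} {X : Matrix (Fin (p + q)) (Fin (p + q)) ℂ}
    (hX : X.IsHermitian) :
    X = (fromBlocks (blockTL p q X) (blockTR p q X) (blockTR p q X)ᴴ
      (blockBR p q X)).submatrix finSumFinEquiv.symm finSumFinEquiv.symm := by
  ext i j
  induction i using Fin.addCases <;> induction j using Fin.addCases <;>
    simp [blockTL, blockTR, blockBR, hX.apply]

lemma conjTranspose_fromRows_mul_fromRows {m n : Type*} [Fintype m] [DecidableEq n]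
    {U W : Matrix m n ℂ} (hU : Uᴴ * U = 1) (hW : Wᴴ * W = 1) :
    (fromRows U W)ᴴ * fromRows U W = (2 : ℂ) • 1 := by
  rw [conjTranspose_fromRows_eq_fromCols_conjTranspose, fromCols_mul_fromRows, hU, hW, two_smul]

lemma fromRows_conj_fromBlocks {m n : Type*} [Fintype m]
    (U W : Matrix m n ℂ) (A B C : Matrix m m ℂ) :
    (fromRows U W)ᴴ * fromBlocks A B Bᴴ C * fromRows U W =
      Uᴴ * A * U + Wᴴ * C * W + (Uᴴ * B * W + (Uᴴ * B * W)ᴴ) := by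
  rw [conjTranspose_fromRows_eq_fromCols_conjTranspose, fromCols_mul_fromBlocks,
    fromCols_mul_fromRows]
  simp only [conjTranspose_mul, conjTranspose_conjTranspose, Matrix.add_mul, Matrix.mul_assoc]
  abel

lemma exists_isometry_compression_eq {n : ℕ} {X : Matrix (Fin (n + n)) (Fin (n + n)) ℂ}
    (hX : X.IsHermitian) {U W : Matrix (Fin n) (Fin n) ℂ} (hU : Uᴴ * U = 1) (hW : Wᴴ * W = 1) :
    ∃ G : Matrix (Fin (n + n)) (Fin n) ℂ, Gᴴ * G = 1 ∧
      Gᴴ * X * G = (2⁻¹ : ℂ) • (Uᴴ * blockTL n n X * U + Wᴴ * blockBR n n X * W +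
        (Uᴴ * blockTR n n X * W + (Uᴴ * blockTR n n X * W)ᴴ)) := by
  obtain ⟨c, hc, hcs⟩ : ∃ c : ℂ, c * c = 2⁻¹ ∧ star c = c :=
    ⟨((√2)⁻¹ : ℝ), by rw [← Complex.ofReal_mul, ← mul_inv, Real.mul_self_sqrt zero_le_two]; simp,
      Complex.conj_ofReal _⟩
  refine ⟨(c • fromRows U W).submatrix finSumFinEquiv.symm id, ?_, ?_⟩
  · rw [conjTranspose_submatrix, submatrix_mul_equiv, submatrix_id_id, conjTranspose_smul, hcs,
      Matrix.smul_mul, Matrix.mul_smul, conjTranspose_fromRows_mul_fromRows hU hW, smul_smul,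
      smul_smul, hc, inv_mul_cancel₀ two_ne_zero, one_smul]
  · conv_lhs => rw [eq_submatrix_fromBlocks hX]
    rw [conjTranspose_submatrix, submatrix_mul_equiv, submatrix_mul_equiv, submatrix_id_id,
      conjTranspose_smul, hcs, Matrix.smul_mul, Matrix.smul_mul, Matrix.mul_smul, smul_smul, hc,
      fromRows_conj_fromBlocks]

lemma exists_compressions_sub_eq_diagonal {n : ℕ} {X : Matrix (Fin (n + n)) (Fin (n + n)) ℂ}
    (hX : X.IsHermitian) :
    ∃ G H : Matrix (Fin (n + n)) (Fin n) ℂ, Gᴴ * G = 1 ∧ Hᴴ * H = 1 ∧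
      Gᴴ * X * G - Hᴴ * X * H =
        diagonal fun i : Fin n => ((2 * sval (blockTR n n X) i : ℝ) : ℂ) := by
  obtain ⟨U, V, hU, hV, hUV⟩ := exists_unitary_mul_mul_eq_diagonal_sval (blockTR n n X)
  obtain ⟨G, hG, hGX⟩ := exists_isometry_compression_eq hX hU hV
  obtain ⟨H, hH, hHX⟩ := exists_isometry_compression_eq hX hU (W := -V)
    (by rwa [conjTranspose_neg, neg_mul_neg])
  have hsymm : (diagonal fun i : Fin n => (sval (blockTR n n X) i : ℂ))ᴴ =
      diagonal fun i : Fin n => (sval (blockTR n n X) i : ℂ) := by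
    rw [diagonal_conjTranspose]
    exact congrArg diagonal (funext fun i => Complex.conj_ofReal _)
  have hdouble : (diagonal fun i : Fin n => ((2 * sval (blockTR n n X) i : ℝ) : ℂ)) =
      (2 : ℂ) • diagonal fun i : Fin n => (sval (blockTR n n X) i : ℂ) := by
    rw [← diagonal_smul]
    exact congrArg diagonal (funext fun i => Complex.ofReal_mul _ _)
  refine ⟨G, H, hG, hH, ?_⟩
  rw [hGX, hHX, hdouble]
  simp only [Matrix.mul_neg, conjTranspose_neg, Matrix.neg_mul, neg_neg, hUV, hsymm]
  module

lemma exists_mem_Horn_of_mem_coneA {n : ℕ} {l : Fin (n + n) → ℝ} {s : Fin n → ℝ}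
    (h : (l, s) ∈ coneA n n) :
    ∃ p q : Fin n → ℝ, ((2 : ℝ) • s, q, p) ∈ Horn n ∧
      (∀ i, p i ≤ l (Fin.castAdd n i)) ∧ ∀ i, l (Fin.natAdd n i) ≤ q i := by
  obtain ⟨X, hX, rfl, hs⟩ := h
  obtain ⟨G, H, hG, hH, hGH⟩ := exists_compressions_sub_eq_diagonal hX
  obtain rfl : s = fun i : Fin n => sval (blockTR n n X) i := funext hs
  have hP := isHermitian_conjTranspose_mul_mul G hX
  have hQ := isHermitian_conjTranspose_mul_mul H hX
  refine ⟨eigVec _ hP, eigVec _ hQ, ?_, fun i => cauchy_eigVec_compression_le hX hG le_rfl,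
    fun i => cauchy_eigVec_le_compression hX hH (by simp only [Fin.val_rev, Fin.val_natAdd]; omega)⟩
  refine mem_Horn_of_charpoly (hP.sub hQ) hQ ?_ (eigVec_antitone hQ) (eigVec_antitone hP) ?_
    (charpoly_eq_polyOfRoots_eigVec hQ) ?_
  · exact fun i j hij => mul_le_mul_of_nonneg_left (sval_antitone _ hij) zero_le_two
  · rw [hGH]
    exact charpoly_diagonal_ofReal _
  · rw [sub_add_cancel, charpoly_eq_polyOfRoots_eigVec hP]

end Compressions

section HornInequalities

/-- The left-hand sides of the thirteen inequalities, with `c = 2s`. -/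
def hornLeft (c : Fin 3 → ℝ) : Fin 13 → ℝ :=
  ![c 0, c 1, c 1, c 2, c 2, c 2,
    c 0 + c 1, c 0 + c 2, c 0 + c 2, c 1 + c 2, c 1 + c 2, c 1 + c 2, c 0 + c 1 + c 2]

/-- The right-hand sides of the thirteen inequalities, with `p = (λ₁, λ₂, λ₃)` and
`q = (λ₄, λ₅, λ₆)`. -/
def hornRight (p q : Fin 3 → ℝ) : Fin 13 → ℝ :=
  ![p 0 - q 2, p 1 - q 2, p 0 - q 1, p 0 - q 0, p 1 - q 1, p 2 - q 2,
    p 0 + p 1 - q 1 - q 2, p 0 + p 1 - q 0 - q 2, p 0 + p 2 - q 1 - q 2,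
    p 0 + p 1 - q 0 - q 1, p 0 + p 2 - q 0 - q 2, p 1 + p 2 - q 1 - q 2,
    p 0 + p 1 + p 2 - q 0 - q 1 - q 2]

/-- The thirteen inequalities of the theorem, for `λ = (p, q)` and `2s = c`. Together with the trace
identity they say that `c`, `q`, `p` satisfy Horn's inequalities for `p = c + q`. -/
def HornIneqs (p q c : Fin 3 → ℝ) : Prop :=
  hornLeft c ≤ hornRight p q

lemma hornIneqs_iff (p q c : Fin 3 → ℝ) : HornIneqs p q c ↔
    c 0 ≤ p 0 - q 2 ∧ c 1 ≤ p 1 - q 2 ∧ c 1 ≤ p 0 - q 1 ∧ c 2 ≤ p 0 - q 0 ∧ c 2 ≤ p 1 - q 1 ∧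
    c 2 ≤ p 2 - q 2 ∧ c 0 + c 1 ≤ p 0 + p 1 - q 1 - q 2 ∧ c 0 + c 2 ≤ p 0 + p 1 - q 0 - q 2 ∧
    c 0 + c 2 ≤ p 0 + p 2 - q 1 - q 2 ∧ c 1 + c 2 ≤ p 0 + p 1 - q 0 - q 1 ∧
    c 1 + c 2 ≤ p 0 + p 2 - q 0 - q 2 ∧ c 1 + c 2 ≤ p 1 + p 2 - q 1 - q 2 ∧
    c 0 + c 1 + c 2 ≤ p 0 + p 1 + p 2 - q 0 - q 1 - q 2 := by
  simp [HornIneqs, hornLeft, hornRight, Pi.le_def, Fin.forall_fin_succ]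

lemma HornIneqs.mono {p p' q q' c : Fin 3 → ℝ} (h : HornIneqs p q c) (hp : p ≤ p') (hq : q' ≤ q) :
    HornIneqs p' q' c := by
  rw [hornIneqs_iff] at h ⊢
  obtain ⟨_, _, _, _, _, _, _, _, _, _, _, _, _⟩ := h
  refine ⟨?_, ?_, ?_, ?_, ?_, ?_, ?_, ?_, ?_, ?_, ?_, ?_, ?_⟩ <;>
    linarith [hp 0, hp 1, hp 2, hq 0, hq 1, hq 2]

-- The inequalities with two summands on the left are Weyl inequalities subtracted from the trace.
lemma hornIneqs_of_mem_Horn {p q c : Fin 3 → ℝ} (h : (c, q, p) ∈ Horn 3) : HornIneqs p q c := by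
  have htrace := sum_eq_sum_add_sum_of_mem_Horn h
  simp only [Fin.sum_univ_three] at htrace
  have upper (i j m : Fin 3) (hijm : (i : ℕ) + j ≤ m) : p m ≤ c i + q j :=
    weyl_le_add_of_mem_Horn h hijm
  have lower (i j m : Fin 3) (hijm : (i.rev : ℕ) + j.rev ≤ m.rev) : c i + q j ≤ p m :=
    weyl_add_le_of_mem_Horn h hijm
  rw [hornIneqs_iff]
  refine ⟨?_, ?_, ?_, ?_, ?_, ?_, ?_, ?_, ?_, ?_, ?_, ?_, ?_⟩
  · linarith [lower 0 2 0 (by decide)]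
  · linarith [lower 1 2 1 (by decide)]
  · linarith [lower 1 1 0 (by decide)]
  · linarith [lower 2 0 0 (by decide)]
  · linarith [lower 2 1 1 (by decide)]
  · linarith [lower 2 2 2 (by decide)]
  · linarith [upper 2 0 2 (by decide)]
  · linarith [upper 1 1 2 (by decide)]
  · linarith [upper 1 0 1 (by decide)]
  · linarith [upper 0 2 2 (by decide)]
  · linarith [upper 0 1 1 (by decide)]
  · linarith [upper 0 0 0 (by decide)]
  · linarith

lemma hornIneqs_of_mem_coneA {l : Fin (3 + 3) → ℝ} {s : Fin 3 → ℝ} (h : (l, s) ∈ coneA 3 3) :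
    HornIneqs (fun i => l (Fin.castAdd 3 i)) (fun i => l (Fin.natAdd 3 i)) ((2 : ℝ) • s) := by
  obtain ⟨p, q, hHorn, hp, hq⟩ := exists_mem_Horn_of_mem_coneA h
  exact (hornIneqs_of_mem_Horn hHorn).mono hp hq

end HornInequalities

section BlockCharpoly

lemma isHermitian_diagonal_ofReal {ι : Type*} [DecidableEq ι] (d : ι → ℝ) :
    (diagonal fun i => (d i : ℂ)).IsHermitian :=
  isHermitian_diagonal_of_self_adjoint _ (funext fun i => Complex.conj_ofReal (d i))

variable {ι κ : Type*} [Fintype ι] [DecidableEq ι] [Fintype κ] [DecidableEq κ]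

/-- `f` is the characteristic polynomial of Hermitian `2 × 2` block matrices with off-diagonal
blocks `x • diagonal c`, for every `0 ≤ x ≤ 1 / 2`. Admitting all these `x` at once, and not only
`x = 1 / 2`, makes the notion stable under shrinking `c`. -/
def IsBlockCharpoly (c : ι → ℝ) (f : Polynomial ℂ) : Prop :=
  ∀ x ∈ Set.Icc (0 : ℝ) (1 / 2), ∃ A C : Matrix ι ι ℂ, A.IsHermitian ∧ C.IsHermitian ∧
    (fromBlocks A (diagonal fun i => ((x * c i : ℝ) : ℂ))
      (diagonal fun i => ((x * c i : ℝ) : ℂ)) C).charpoly = f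

lemma isBlockCharpoly_zero (p q : ι → ℝ) :
    IsBlockCharpoly (0 : ι → ℝ) (polyOfRoots p * polyOfRoots q) := fun x _ => by
  refine ⟨_, _, isHermitian_diagonal_ofReal p, isHermitian_diagonal_ofReal q, ?_⟩
  simp only [Pi.zero_apply, mul_zero, Complex.ofReal_zero, diagonal_zero]
  rw [charpoly_fromBlocks_zero₁₂, charpoly_diagonal_ofReal, charpoly_diagonal_ofReal]

namespace IsBlockCharpoly

lemma mem_coneA {n : ℕ} {l : Fin (n + n) → ℝ} {s : Fin n → ℝ}
    (h : IsBlockCharpoly ((2 : ℝ) • s) (polyOfRoots l)) (hl : Antitone l) (hs : Antitone s)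
    (hs0 : ∀ i, 0 ≤ s i) : (l, s) ∈ coneA n n := by
  obtain ⟨A, C, hA, hC, hf⟩ := h (1 / 2) (by norm_num)
  have hhalf : (fun i => ((1 / 2 * ((2 : ℝ) • s) i : ℝ) : ℂ)) = fun i => (s i : ℂ) := by
    ext i
    simp
  rw [hhalf] at hf
  set F := fromBlocks A (diagonal fun i => (s i : ℂ)) (diagonal fun i => (s i : ℂ)) C
  have hF : F.IsHermitian := hA.fromBlocks (isHermitian_diagonal_ofReal s) hC
  have hX : (reindex finSumFinEquiv finSumFinEquiv F).IsHermitian := hF.submatrix _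
  have hblock : blockTR n n (reindex finSumFinEquiv finSumFinEquiv F) =
      diagonal fun i => (s i : ℂ) := by
    ext i j
    rw [blockTR, submatrix_apply, reindex_apply, submatrix_apply,
      finSumFinEquiv_symm_apply_castAdd, finSumFinEquiv_symm_apply_natAdd]
    rfl
  refine ⟨_, hX, (eigVec_eq_of_charpoly hX hl ((charpoly_reindex _ F).trans hf)).symm, fun i => ?_⟩
  rw [hblock]
  exact (sval_diagonal hs hs0 i).symm

lemma smul {c : ι → ℝ} {f : Polynomial ℂ} (h : IsBlockCharpoly c f) {t : ℝ}
    (ht : t ∈ Set.Icc (0 : ℝ) 1) : IsBlockCharpoly (t • c) f := fun x hx => by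
  simpa only [Pi.smul_apply, smul_eq_mul, mul_assoc] using h (x * t)
    ⟨mul_nonneg hx.1 ht.1, (mul_le_of_le_one_right hx.1 ht.2).trans hx.2⟩

lemma comp_equiv {c : ι → ℝ} {f : Polynomial ℂ} (h : IsBlockCharpoly c f) (e : κ ≃ ι) :
    IsBlockCharpoly (c ∘ e) f := fun x hx => by
  obtain ⟨A, C, hA, hC, rfl⟩ := h x hx
  refine ⟨A.submatrix e e, C.submatrix e e, hA.submatrix e, hC.submatrix e, ?_⟩
  rw [← charpoly_reindex (e.sumCongr e).symm]
  congr 1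
  ext (i | i) (j | j) <;> simp [diagonal_apply]

lemma sumElim {c : ι → ℝ} {d : κ → ℝ} {f g : Polynomial ℂ} (hf : IsBlockCharpoly c f)
    (hg : IsBlockCharpoly d g) : IsBlockCharpoly (Sum.elim c d) (f * g) := fun x hx => by
  obtain ⟨A, C, hA, hC, rfl⟩ := hf x hx
  obtain ⟨A', C', hA', hC', rfl⟩ := hg x hx
  refine ⟨fromBlocks A 0 0 A', fromBlocks C 0 0 C', hA.fromBlocks (conjTranspose_zero) hA',
    hC.fromBlocks (conjTranspose_zero) hC', ?_⟩
  rw [← charpoly_fromBlocks_zero₁₂ (M₂₁ := 0), ← charpoly_reindex (Equiv.sumSumSumComm ι κ ι κ)]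
  congr 1
  ext ((i | i) | (i | i)) ((j | j) | (j | j)) <;> simp [diagonal_apply]

end IsBlockCharpoly

lemma exists_sq_add_sq_eq_one_mul_eq {x : ℝ} (hx : x ∈ Set.Icc (0 : ℝ) (1 / 2)) :
    ∃ a b : ℝ, a ^ 2 + b ^ 2 = 1 ∧ a * b = x := by
  have hplus := Real.sq_sqrt (show 0 ≤ 1 + 2 * x by linarith [hx.1])
  have hminus := Real.sq_sqrt (show 0 ≤ 1 - 2 * x by linarith [hx.2])
  refine ⟨(√(1 + 2 * x) + √(1 - 2 * x)) / 2, (√(1 + 2 * x) - √(1 - 2 * x)) / 2, ?_, ?_⟩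
  · linear_combination (1 / 2) * hplus + (1 / 2) * hminus
  · linear_combination (1 / 4) * hplus - (1 / 4) * hminus

lemma charpoly_rotation_fromBlocks {a b : ℂ} (h : a ^ 2 + b ^ 2 = 1) (P Q : Matrix ι ι ℂ) :
    (fromBlocks (a ^ 2 • P + b ^ 2 • Q) ((a * b) • (P - Q)) ((a * b) • (P - Q))
      (b ^ 2 • P + a ^ 2 • Q)).charpoly = P.charpoly * Q.charpoly := by
  let R : Matrix (ι ⊕ ι) (ι ⊕ ι) ℂ := fromBlocks (a • 1) (-b • 1) (b • 1) (a • 1)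
  let R' : Matrix (ι ⊕ ι) (ι ⊕ ι) ℂ := fromBlocks (a • 1) (b • 1) (-b • 1) (a • 1)
  have hR : R' * R = 1 := by
    simp only [R, R', fromBlocks_multiply, ← fromBlocks_one]
    congr 1 <;> simp only [smul_mul_assoc, mul_smul_comm, one_mul] <;> match_scalars <;>
      first | linear_combination h | ring
  rw [← charpoly_fromBlocks_zero₁₂ (M₂₁ := 0)]
  calc _ = (R * fromBlocks P 0 0 Q * R').charpoly := by
        simp only [R, R', fromBlocks_multiply]
        congr 2 <;> simp only [smul_mul_assoc, mul_smul_comm, one_mul, mul_one, mul_zero, add_zero,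
          zero_add] <;> module
    _ = _ := by rw [charpoly_mul_comm, ← Matrix.mul_assoc, hR, Matrix.one_mul]

lemma isBlockCharpoly_of_sub_eq_diagonal {P Q : Matrix ι ι ℂ} {c : ι → ℝ} (hP : P.IsHermitian)
    (hQ : Q.IsHermitian) (hPQ : P - Q = diagonal fun i => (c i : ℂ)) :
    IsBlockCharpoly c (P.charpoly * Q.charpoly) := fun x hx => by
  obtain ⟨a, b, hab, rfl⟩ := exists_sq_add_sq_eq_one_mul_eq hx
  have hoff : (diagonal fun i => ((a * b * c i : ℝ) : ℂ)) = ((a : ℂ) * b) • (P - Q) := by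
    rw [hPQ, ← diagonal_smul]
    refine congrArg diagonal (funext fun i => ?_)
    simp
  refine ⟨(a ^ 2 : ℂ) • P + (b ^ 2 : ℂ) • Q, (b ^ 2 : ℂ) • P + (a ^ 2 : ℂ) • Q, ?_, ?_, ?_⟩
  · simp [IsHermitian, hP.eq, hQ.eq]
  · simp [IsHermitian, hP.eq, hQ.eq]
  · rw [hoff]
    exact charpoly_rotation_fromBlocks (mod_cast hab) P Q

lemma isBlockCharpoly_of_mem_Horn {n : ℕ} {p q c : Fin n → ℝ} (h : (c, q, p) ∈ Horn n) :
    IsBlockCharpoly c (polyOfRoots p * polyOfRoots q) := by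
  obtain ⟨X, Y, hX, hY, rfl, rfl, rfl⟩ := h
  obtain ⟨U, hU, hXU⟩ := exists_unitary_eigVec hX
  have hconj (M : Matrix (Fin n) (Fin n) ℂ) : (Uᴴ * M * U).charpoly = M.charpoly := by
    rw [charpoly_mul_comm, ← Matrix.mul_assoc, mul_eq_one_comm.mp hU, Matrix.one_mul]
  have hdiff : Uᴴ * (X + Y) * U - Uᴴ * Y * U = diagonal fun i => (eigVec X hX i : ℂ) := by
    rw [← Matrix.sub_mul, ← Matrix.mul_sub, add_sub_cancel_right]
    conv_lhs => rw [hXU]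
    rw [Matrix.mul_assoc, Matrix.mul_assoc, hU, Matrix.mul_one, ← Matrix.mul_assoc, hU,
      Matrix.one_mul]
  have := isBlockCharpoly_of_sub_eq_diagonal (isHermitian_conjTranspose_mul_mul U (hX.add hY))
    (isHermitian_conjTranspose_mul_mul U hY) hdiff
  rwa [hconj, hconj, charpoly_eq_polyOfRoots_eigVec (hX.add hY),
    charpoly_eq_polyOfRoots_eigVec hY] at this

lemma isBlockCharpoly_pair {a b c : ℝ} (hc : 0 ≤ c) (h : c ≤ a - b) :
    IsBlockCharpoly (fun _ : PUnit.{1} => c)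
      ((Polynomial.X - Polynomial.C (a : ℂ)) * (Polynomial.X - Polynomial.C (b : ℂ))) := by
  have htight := isBlockCharpoly_of_sub_eq_diagonal (c := fun _ : PUnit.{1} => a - b)
    (isHermitian_diagonal_ofReal fun _ => a) (isHermitian_diagonal_ofReal fun _ => b) (by simp)
  rw [charpoly_diagonal_ofReal, charpoly_diagonal_ofReal] at htight
  have hscale : (fun _ : PUnit.{1} => c) = (c / (a - b)) • fun _ => a - b := funext fun _ =>
    (div_mul_cancel_of_imp fun hab => le_antisymm (hab ▸ h) hc).symm
  rw [hscale]
  simpa only [polyOfRoots, Fintype.prod_unique] using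
    htight.smul ⟨div_nonneg hc (hc.trans h), div_le_one_of_le₀ h (hc.trans h)⟩

lemma polyOfRoots_eq_mul_succAbove {n : ℕ} (l : Fin (n + 1) → ℝ) (i : Fin (n + 1)) :
    polyOfRoots l = (Polynomial.X - Polynomial.C (l i : ℂ)) * polyOfRoots (l ∘ i.succAbove) :=
  Fin.prod_univ_succAbove _ i

lemma IsBlockCharpoly.insertNth {n : ℕ} {p q c : Fin (n + 1) → ℝ} (i j k : Fin (n + 1))
    (hk0 : 0 ≤ c k) (hk : c k ≤ p i - q j)
    (h : IsBlockCharpoly (c ∘ k.succAbove)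
      (polyOfRoots (p ∘ i.succAbove) * polyOfRoots (q ∘ j.succAbove))) :
    IsBlockCharpoly c (polyOfRoots p * polyOfRoots q) := by
  have hsum := ((h.sumElim (isBlockCharpoly_pair hk0 hk)).comp_equiv
    ((finSuccEquiv' k).trans (Equiv.optionEquivSumPUnit.{_, 0} _)))
  rw [polyOfRoots_eq_mul_succAbove p i, polyOfRoots_eq_mul_succAbove q j, mul_mul_mul_comm,
    mul_comm]
  convert hsum using 1
  ext m
  rcases Fin.eq_self_or_eq_succAbove k m with rfl | ⟨m, rfl⟩ <;> simp

lemma exists_tight_scale {α : Type*} [Finite α] {a b : α → ℝ} (h : a ≤ b) (h0 : ∃ i, 0 < a i) :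
    ∃ τ : ℝ, 1 ≤ τ ∧ τ • a ≤ b ∧ ∃ i, τ * a i = b i := by
  have : Nonempty {i // 0 < a i} := let ⟨i, hi⟩ := h0; ⟨⟨i, hi⟩⟩
  obtain ⟨⟨i, hi⟩, hmin⟩ := Finite.exists_min fun i : {i // 0 < a i} => b i / a i
  have hone : 1 ≤ b i / a i := (one_le_div hi).mpr (h i)
  refine ⟨b i / a i, hone, fun j => ?_, i, div_mul_cancel₀ _ hi.ne'⟩
  rcases lt_or_ge 0 (a j) with hj | hj
  · exact (le_div_iff₀ hj).mp (hmin ⟨j, hj⟩)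
  · exact (mul_le_of_one_le_left hj hone).trans (h j)

lemma IsBlockCharpoly.of_smul {c : ι → ℝ} {f : Polynomial ℂ} {τ : ℝ} (hτ : 1 ≤ τ)
    (h : IsBlockCharpoly (τ • c) f) : IsBlockCharpoly c f := by
  have := h.smul (t := τ⁻¹) ⟨by positivity, inv_le_one_of_one_le₀ hτ⟩
  rwa [inv_smul_smul₀ (by positivity)] at this

end BlockCharpoly

section SizeTwo

lemma isBlockCharpoly_one {p q c : Fin 1 → ℝ} (h0 : 0 ≤ c 0) (h : c 0 ≤ p 0 - q 0) :
    IsBlockCharpoly c (polyOfRoots p * polyOfRoots q) :=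
  .insertNth 0 0 0 h0 h <| by
    rw [Subsingleton.elim (c ∘ Fin.succAbove 0) 0]
    exact isBlockCharpoly_zero _ _

-- `x` is the top left entry of a matrix `P` with eigenvalues `p₀, p₁`, and `y` its off-diagonal
-- entry; the first equation says that `P - diagonal c` has determinant `q₀ * q₁`.
lemma exists_entries_two {p q c : Fin 2 → ℝ} (hc : c 1 ≤ c 0) (h01 : c 0 ≤ p 0 - q 1)
    (h10 : c 1 ≤ p 0 - q 0) (h11 : c 1 ≤ p 1 - q 1) (ht : c 0 + c 1 = p 0 + p 1 - q 0 - q 1) :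
    ∃ x y : ℝ, (c 0 - c 1) * x = q 0 * q 1 - p 0 * p 1 - c 0 * c 1 + c 0 * (p 0 + p 1) ∧
      y ^ 2 = (p 0 - x) * (x - p 1) := by
  rcases hc.eq_or_lt with hc | hc
  · refine ⟨p 0, 0, ?_, by ring⟩
    rw [show q 0 = p 0 - c 0 by linarith, show q 1 = p 1 - c 0 by linarith, hc]
    ring
  · have hpos : 0 < c 0 - c 1 := sub_pos.mpr hc
    set x := (q 0 * q 1 - p 0 * p 1 - c 0 * c 1 + c 0 * (p 0 + p 1)) / (c 0 - c 1)
    have hx : (c 0 - c 1) * x = q 0 * q 1 - p 0 * p 1 - c 0 * c 1 + c 0 * (p 0 + p 1) :=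
      mul_div_cancel₀ _ hpos.ne'
    have hq : q 0 = p 0 + p 1 - q 1 - c 0 - c 1 := by linarith
    refine ⟨x, √((p 0 - x) * (x - p 1)), hx, Real.sq_sqrt (mul_nonneg ?_ ?_)⟩ <;>
      refine nonneg_of_mul_nonneg_right ?_ hpos
    · calc 0 ≤ (p 0 - c 0 - q 1) * (q 0 - (p 0 - c 0)) :=
            mul_nonneg (by linarith) (by linarith)
        _ = (c 0 - c 1) * (p 0 - x) := by rw [mul_sub (c 0 - c 1), hx, hq]; ring
    · calc 0 ≤ (p 0 - c 1 - q 0) * (p 0 - c 1 - q 1) :=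
            mul_nonneg (by linarith) (by linarith)
        _ = (c 0 - c 1) * (x - p 1) := by rw [mul_sub (c 0 - c 1), hx, hq]; ring

lemma charpoly_fin_two_eq_polyOfRoots {a b d : ℂ} {p : Fin 2 → ℝ} (htrace : a + d = p 0 + p 1)
    (hdet : a * d - b * b = p 0 * p 1) : !![a, b; b, d].charpoly = polyOfRoots p := by
  rw [charpoly_fin_two, polyOfRoots, Fin.prod_univ_two, trace_fin_two_of, det_fin_two_of, htrace,
    hdet]
  simp only [map_add, map_mul]
  ring

lemma isBlockCharpoly_two_of_trace_eq {p q c : Fin 2 → ℝ} (hc : c 1 ≤ c 0) (h01 : c 0 ≤ p 0 - q 1)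
    (h10 : c 1 ≤ p 0 - q 0) (h11 : c 1 ≤ p 1 - q 1) (ht : c 0 + c 1 = p 0 + p 1 - q 0 - q 1) :
    IsBlockCharpoly c (polyOfRoots p * polyOfRoots q) := by
  obtain ⟨x, y, hx, hy⟩ := exists_entries_two hc h01 h10 h11 ht
  have hxC : ((c 0 : ℂ) - c 1) * x = q 0 * q 1 - p 0 * p 1 - c 0 * c 1 + c 0 * (p 0 + p 1) :=
    mod_cast hx
  have hyC : (y : ℂ) ^ 2 = (p 0 - x) * (x - p 1) := mod_cast hy
  have htC : (c 0 : ℂ) + c 1 = p 0 + p 1 - q 0 - q 1 := mod_cast ht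
  have hP : !![(x : ℂ), y; y, p 0 + p 1 - x].charpoly = polyOfRoots p :=
    charpoly_fin_two_eq_polyOfRoots (by ring) (by linear_combination -hyC)
  have hQ : !![(x : ℂ) - c 0, y; y, p 0 + p 1 - x - c 1].charpoly = polyOfRoots q :=
    charpoly_fin_two_eq_polyOfRoots (by linear_combination -htC)
      (by linear_combination -hyC + hxC)
  rw [← hP, ← hQ]
  apply isBlockCharpoly_of_sub_eq_diagonal <;> ext i j <;> fin_cases i <;> fin_cases j <;> simp

lemma isBlockCharpoly_two {p q c : Fin 2 → ℝ} (hc : c 1 ≤ c 0) (hc0 : 0 ≤ c 1)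
    (h01 : c 0 ≤ p 0 - q 1) (h10 : c 1 ≤ p 0 - q 0) (h11 : c 1 ≤ p 1 - q 1)
    (ht : c 0 + c 1 ≤ p 0 + p 1 - q 0 - q 1) :
    IsBlockCharpoly c (polyOfRoots p * polyOfRoots q) := by
  rcases (hc0.trans hc).eq_or_lt with hzero | hpos
  · obtain rfl : c = 0 := funext (Fin.forall_fin_two.mpr ⟨hzero.symm, by simp; linarith⟩)
    exact isBlockCharpoly_zero p q
  have hle : ![c 0, c 1, c 1, c 0 + c 1] ≤
      ![p 0 - q 1, p 0 - q 0, p 1 - q 1, p 0 + p 1 - q 0 - q 1] := by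
    simp [Pi.le_def, Fin.forall_fin_succ, h01, h10, h11, ht]
  obtain ⟨τ, hτ, hτle, i, hi⟩ := exists_tight_scale hle ⟨0, hpos⟩
  have hτc : 0 ≤ τ * c 1 := by positivity
  have hτ01 : τ * c 1 ≤ τ * c 0 := by gcongr
  have h01' : τ * c 0 ≤ p 0 - q 1 := hτle 0
  have h10' : τ * c 1 ≤ p 0 - q 0 := hτle 1
  have h11' : τ * c 1 ≤ p 1 - q 1 := hτle 2
  have ht' : τ * (c 0 + c 1) ≤ p 0 + p 1 - q 0 - q 1 := hτle 3
  rw [mul_add] at ht'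
  refine .of_smul hτ ?_
  fin_cases i
  · have htight : τ * c 0 = p 0 - q 1 := hi
    exact .insertNth 0 1 0 (hτc.trans hτ01) h01'
      (isBlockCharpoly_one (by simpa) (by simp; linarith))
  · have htight : τ * c 1 = p 0 - q 0 := hi
    exact .insertNth 0 0 1 hτc h10'
      (isBlockCharpoly_one (by simpa using hτc.trans hτ01) (by simp; linarith))
  · have htight : τ * c 1 = p 1 - q 1 := hi
    exact .insertNth 1 1 1 hτc h11'
      (isBlockCharpoly_one (by simpa using hτc.trans hτ01) (by simp; linarith))
  · have htight : τ * (c 0 + c 1) = p 0 + p 1 - q 0 - q 1 := hi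
    exact isBlockCharpoly_two_of_trace_eq hτ01 h01' h10' h11' (mul_add τ _ _ ▸ htight)

end SizeTwo

section Facets

lemma isBlockCharpoly_of_split {p q c : Fin 3 → ℝ} (hc : Antitone c) (hc0 : ∀ i, 0 ≤ c i)
    (i j k : Fin 3) (hk : c k ≤ p i - q j)
    (h01 : c (k.succAbove 0) ≤ p (i.succAbove 0) - q (j.succAbove 1))
    (h10 : c (k.succAbove 1) ≤ p (i.succAbove 0) - q (j.succAbove 0))
    (h11 : c (k.succAbove 1) ≤ p (i.succAbove 1) - q (j.succAbove 1))
    (ht : c (k.succAbove 0) + c (k.succAbove 1) ≤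
      p (i.succAbove 0) + p (i.succAbove 1) - q (j.succAbove 0) - q (j.succAbove 1)) :
    IsBlockCharpoly c (polyOfRoots p * polyOfRoots q) :=
  .insertNth i j k (hc0 k) hk <|
    isBlockCharpoly_two (hc (k.strictMono_succAbove.monotone (by decide))) (hc0 _) h01 h10 h11 ht

lemma isBlockCharpoly_of_facet {p q c : Fin 3 → ℝ} (hc : Antitone c) (hc0 : ∀ i, 0 ≤ c i)
    (h : HornIneqs p q c) {m : Fin 13} (hm : m ≠ 12) (htight : hornLeft c m = hornRight p q m) :
    IsBlockCharpoly c (polyOfRoots p * polyOfRoots q) := by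
  have split := isBlockCharpoly_of_split (p := p) (q := q) hc hc0
  obtain ⟨_, _, _, _, _, _, _, _, _, _, _, _, _⟩ := (hornIneqs_iff p q c).mp h
  have hc1 : c 1 ≤ c 0 := hc (by decide)
  have hc2 : c 2 ≤ c 1 := hc (by decide)
  fin_cases m
  · have tight : c 0 = p 0 - q 2 := htight
    refine split 0 2 0 tight.le ?_ ?_ ?_ ?_ <;> simp [Fin.succAbove] <;> linarith
  · have tight : c 1 = p 1 - q 2 := htight
    refine split 1 2 1 tight.le ?_ ?_ ?_ ?_ <;> simp [Fin.succAbove] <;> linarith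
  · have tight : c 1 = p 0 - q 1 := htight
    refine split 0 1 1 tight.le ?_ ?_ ?_ ?_ <;> simp [Fin.succAbove] <;> linarith
  · have tight : c 2 = p 0 - q 0 := htight
    refine split 0 0 2 tight.le ?_ ?_ ?_ ?_ <;> simp [Fin.succAbove] <;> linarith
  · have tight : c 2 = p 1 - q 1 := htight
    refine split 1 1 2 tight.le ?_ ?_ ?_ ?_ <;> simp [Fin.succAbove] <;> linarith
  · have tight : c 2 = p 2 - q 2 := htight
    refine split 2 2 2 tight.le ?_ ?_ ?_ ?_ <;> simp [Fin.succAbove] <;> linarith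
  · have tight : c 0 + c 1 = p 0 + p 1 - q 1 - q 2 := htight
    refine split 2 0 2 (by linarith) ?_ ?_ ?_ ?_ <;> simp [Fin.succAbove] <;> linarith
  · have tight : c 0 + c 2 = p 0 + p 1 - q 0 - q 2 := htight
    refine split 2 1 1 (by linarith) ?_ ?_ ?_ ?_ <;> simp [Fin.succAbove] <;> linarith
  · have tight : c 0 + c 2 = p 0 + p 2 - q 1 - q 2 := htight
    refine split 1 0 1 (by linarith) ?_ ?_ ?_ ?_ <;> simp [Fin.succAbove] <;> linarith
  · have tight : c 1 + c 2 = p 0 + p 1 - q 0 - q 1 := htight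
    refine split 2 2 0 (by linarith) ?_ ?_ ?_ ?_ <;> simp [Fin.succAbove] <;> linarith
  · have tight : c 1 + c 2 = p 0 + p 2 - q 0 - q 2 := htight
    refine split 1 1 0 (by linarith) ?_ ?_ ?_ ?_ <;> simp [Fin.succAbove] <;> linarith
  · have tight : c 1 + c 2 = p 1 + p 2 - q 1 - q 2 := htight
    refine split 0 0 0 (by linarith) ?_ ?_ ?_ ?_ <;> simp [Fin.succAbove] <;> linarith
  · exact absurd rfl hm

end Facets

section Interlacing

lemma det_diagonal_add_vecMulVec_of_eq_zero {ι R : Type*} [Fintype ι] [DecidableEq ι] [CommRing R]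
    {w : ι → R} {i : ι} (hw : w i = 0) (u v : ι → R) :
    (diagonal w + vecMulVec u v).det = u i * v i * ∏ j ∈ Finset.univ.erase i, w j := by
  have hrow : (diagonal w + vecMulVec u v) i = u i • v := by
    ext j
    rcases eq_or_ne i j with rfl | hj
    · simp [hw, vecMulVec_apply]
    · simp [hj, vecMulVec_apply]
  have helim : ((diagonal w + vecMulVec u v).updateRow i v).det =
      ((diagonal w).updateRow i v).det := by
    refine det_eq_of_forall_row_eq_smul_add_const (Function.update u i 0) i (by simp) ?_
    intro j k
    rcases eq_or_ne j i with rfl | hj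
    · simp
    · simp [hj, vecMulVec_apply]
  rw [← updateRow_eq_self (diagonal w + vecMulVec u v) i, hrow, det_updateRow_smul, helim,
    ← cramer_transpose_apply, diagonal_transpose, cramer_eq_adjugate_mulVec, adjugate_diagonal,
    mulVec_diagonal]
  ring

variable {ι : Type*} {d p : ι → ℝ}

/-- `d` interlaces `p` from above: `d i ≥ p i ≥ d j` for `i < j`. -/
def Interlaces [LinearOrder ι] (d p : ι → ℝ) : Prop :=
  p ≤ d ∧ ∀ i j, i < j → d j ≤ p i

variable [Fintype ι] [DecidableEq ι]

/-- The residue at `d i` of the rational function `∏ j, (x - p j) / (x - d j)`. -/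
noncomputable def residue (d p : ι → ℝ) (i : ι) : ℝ :=
  (d i - p i) * ∏ j ∈ Finset.univ.erase i, (d i - p j) / (d i - d j)

lemma residue_mul_prod (hd : Function.Injective d) (p : ι → ℝ) (i : ι) :
    residue d p i * ∏ j ∈ Finset.univ.erase i, (d i - d j) = ∏ j, (d i - p j) := by
  have hne : ∏ j ∈ Finset.univ.erase i, (d i - d j) ≠ 0 := Finset.prod_ne_zero_iff.mpr
    fun j hj => sub_ne_zero.mpr (hd.ne (Finset.ne_of_mem_erase hj).symm)
  rw [residue, Finset.prod_div_distrib, mul_assoc, div_mul_cancel₀ _ hne,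
    Finset.mul_prod_erase _ (fun j => d i - p j) (Finset.mem_univ i)]

lemma residue_sub_const (d p : ι → ℝ) (a : ℝ) (i : ι) :
    residue (fun j => d j - a) p i = residue d (fun j => p j + a) i := by
  simp only [residue, sub_sub, add_comm a, sub_add_cancel]

/-- The complex matrix `u * uᵀ`. -/
def rankOne (u : ι → ℝ) : Matrix ι ι ℂ :=
  vecMulVec (fun i => (u i : ℂ)) fun i => (u i : ℂ)

lemma charpoly_diagonal_sub_rankOne (hd : Function.Injective d) {u : ι → ℝ}
    (hu : ∀ i, u i ^ 2 = residue d p i) :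
    (diagonal (fun i => (d i : ℂ)) - rankOne u).charpoly = polyOfRoots p := by
  have hmonic : (polyOfRoots p).Monic := Polynomial.monic_prod_X_sub_C _ _
  have hdeg : (polyOfRoots p).degree = Fintype.card ι := by
    simp [polyOfRoots, Polynomial.degree_prod]
  refine Polynomial.eq_of_degree_le_of_eval_index_eq (v := fun i => (d i : ℂ)) Finset.univ
    (fun _ _ _ _ h => hd (Complex.ofReal_injective h)) (charpoly_degree_eq_dim _).le
    ((charpoly_degree_eq_dim _).trans hdeg.symm)
    ((charpoly_monic _).leadingCoeff.trans hmonic.leadingCoeff.symm) fun i _ => ?_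
  have hsplit : scalar ι (d i : ℂ) - (diagonal (fun j => (d j : ℂ)) - rankOne u) =
      diagonal (fun j => (d i : ℂ) - d j) + rankOne u := by
    rw [sub_sub_eq_add_sub, add_sub_right_comm, scalar_apply, diagonal_sub]
  rw [eval_charpoly, hsplit, rankOne, det_diagonal_add_vecMulVec_of_eq_zero (sub_self _), ← sq,
    polyOfRoots, Polynomial.eval_prod]
  simp only [Polynomial.eval_sub, Polynomial.eval_X, Polynomial.eval_C]
  exact_mod_cast (hu i).symm ▸ residue_mul_prod hd p i

lemma sum_sq_eq_of_residue (hd : Function.Injective d) {u : ι → ℝ}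
    (hu : ∀ i, u i ^ 2 = residue d p i) : ∑ i, u i ^ 2 = ∑ i, d i - ∑ i, p i := by
  have htrace := trace_eq_sum_of_charpoly (charpoly_diagonal_sub_rankOne hd hu)
  rw [trace_sub, trace_diagonal, rankOne, trace_vecMulVec, dotProduct] at htrace
  norm_cast at htrace
  simp only [sq]
  linarith

lemma residue_nonneg [LinearOrder ι] (h : Interlaces d p) (i : ι) : 0 ≤ residue d p i := by
  refine mul_nonneg (sub_nonneg.mpr (h.1 i)) (Finset.prod_nonneg fun j hj => ?_)
  rcases lt_or_gt_of_ne (Finset.ne_of_mem_erase hj) with hji | hij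
  · have := h.2 j i hji
    exact div_nonneg_of_nonpos (by linarith) (by linarith [h.1 j])
  · have := (h.1 j).trans ((h.2 i j hij).trans (h.1 i))
    exact div_nonneg (by linarith) (by linarith [h.2 i j hij, h.1 i])

end Interlacing

section InterlacingPolytope

section

variable {ι : Type*} {d p e : ι → ℝ}

lemma convex_setOf_interlaces [LinearOrder ι] (p : ι → ℝ) : Convex ℝ {d | Interlaces d p} := by
  rw [show {d | Interlaces d p} = Set.Ici p ∩ ⋂ (i) (j) (_ : i < j), {d | d j ≤ p i} by
    ext; simp [Interlaces]]
  exact (convex_Ici p).inter <| convex_iInter fun i => convex_iInter fun j => convex_iInter fun _ =>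
    convex_halfSpace_le (LinearMap.proj (R := ℝ) (φ := fun _ => ℝ) j).isLinear (p i)

lemma interlaces_and_interlaces_iff [LinearOrder ι] : Interlaces d p ∧ Interlaces d e ↔
    p ⊔ e ≤ d ∧ ∀ i j, i < j → d j ≤ (p ⊓ e) i := by
  simp only [Interlaces, sup_le_iff, Pi.inf_apply, le_inf_iff, forall_and]
  exact and_and_and_comm

lemma strictAnti_of_interlaces_of_ne [LinearOrder ι] (hp : Interlaces d p) (he : Interlaces d e)
    (hne : ∀ i j, i < j → p i ≠ e i) : StrictAnti d := fun i j hij =>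
  calc d j ≤ min (p i) (e i) := le_min (hp.2 i j hij) (he.2 i j hij)
    _ < max (p i) (e i) := min_lt_max.mpr (hne i j hij)
    _ ≤ d i := max_le (hp.1 i) (he.1 i)

variable [Fintype ι] [DecidableEq ι]

lemma continuousOn_residue {S : Set (ι → ℝ)} (hS : ∀ d ∈ S, Function.Injective d) (p : ι → ℝ)
    (i : ι) : ContinuousOn (fun d => residue d p i) S :=
  ContinuousOn.mul (by fun_prop) <| continuousOn_finsetProd _ fun j hj =>
    ContinuousOn.div (by fun_prop) (by fun_prop) fun d hd =>
      sub_ne_zero.mpr ((hS d hd).ne (Finset.ne_of_mem_erase hj).symm)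

lemma residue_mul_residue_eq_zero {i : ι} (h : d i = max (p i) (e i)) :
    residue d p i * residue d e i = 0 := by
  rcases max_choice (p i) (e i) with hmax | hmax <;> simp [residue, h, hmax]

end

lemma interlaces_and_interlaces_fin_three {p e : Fin 3 → ℝ} {x y z : ℝ}
    (h01 : (p ⊔ e) 1 ≤ (p ⊓ e) 0) (hx : (p ⊔ e) 0 ≤ x) (hy : y ∈ Set.Icc ((p ⊔ e) 1) ((p ⊓ e) 0))
    (hz : z ∈ Set.Icc ((p ⊔ e) 2) ((p ⊓ e) 1)) :
    Interlaces ![x, y, z] p ∧ Interlaces ![x, y, z] e := by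
  have h1 : (p ⊓ e) 1 ≤ (p ⊔ e) 1 := inf_le_sup
  rw [interlaces_and_interlaces_iff]
  constructor
  · intro i
    fin_cases i
    exacts [hx, hy.1, hz.1]
  · intro i j hij
    fin_cases i <;> fin_cases j <;> first | exact absurd hij (by decide) | skip
    exacts [hy.2, hz.2.trans (h1.trans h01), hz.2]

open scoped Pointwise in
lemma exists_interlacing_sum_eq {p e : Fin 3 → ℝ} {T : ℝ} (h01 : (p ⊔ e) 1 ≤ (p ⊓ e) 0)
    (h12 : (p ⊔ e) 2 ≤ (p ⊓ e) 1) (hne : ∀ i j, i < j → p i ≠ e i)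
    (hlow : (p ⊔ e) 0 + (p ⊔ e) 1 + (p ⊔ e) 2 ≤ T)
    (hup : T ≤ (p ⊔ e) 0 + (p ⊓ e) 0 + (p ⊓ e) 1) :
    ∃ d, Interlaces d p ∧ Interlaces d e ∧ ∑ i, d i = T ∧
      √(residue d p 0 * residue d e 0) =
        √(residue d p 1 * residue d e 1) + √(residue d p 2 * residue d e 2) := by
  let S := {d : Fin 3 → ℝ | (Interlaces d p ∧ Interlaces d e) ∧ ∑ i, d i = T}
  let w (i : Fin 3) (d : Fin 3 → ℝ) : ℝ := √(residue d p i * residue d e i)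
  have hw0 (i : Fin 3) (d : Fin 3 → ℝ) : 0 ≤ w i d := Real.sqrt_nonneg _
  have hw (i : Fin 3) (d : Fin 3 → ℝ) (h : d i = (p ⊔ e) i) : w i d = 0 := by
    simp only [w, residue_mul_residue_eq_zero h, Real.sqrt_zero]
  have hconvex : Convex ℝ S := ((convex_setOf_interlaces p).inter (convex_setOf_interlaces e)).inter
    (convex_hyperplane ⟨fun _ _ => Finset.sum_add_distrib, fun _ _ => (Finset.mul_sum ..).symm⟩ T)
  have hcont : ContinuousOn (fun d => w 0 d - (w 1 d + w 2 d)) S := by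
    have hinj (d) (hd : d ∈ S) : Function.Injective d :=
      (strictAnti_of_interlaces_of_ne hd.1.1 hd.1.2 hne).injective
    have hwS (i : Fin 3) : ContinuousOn (w i) S :=
      ((continuousOn_residue hinj p i).mul (continuousOn_residue hinj e i)).sqrt
    exact (hwS 0).sub ((hwS 1).add (hwS 2))
  obtain ⟨y, hy, z, hz, (hyz : y + z = _)⟩ : T - (p ⊔ e) 0 ∈
      Set.Icc ((p ⊔ e) 1) ((p ⊓ e) 0) + Set.Icc ((p ⊔ e) 2) ((p ⊓ e) 1) := by
    rw [Set.Icc_add_Icc h01 h12]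
    constructor <;> linarith
  set a := ![(p ⊔ e) 0, y, z]
  set b := ![T - (p ⊔ e) 1 - (p ⊔ e) 2, (p ⊔ e) 1, (p ⊔ e) 2]
  have ha : a ∈ S := by
    refine ⟨interlaces_and_interlaces_fin_three h01 le_rfl hy hz, ?_⟩
    simp only [Fin.sum_univ_three, a, cons_val]
    linarith
  have hb : b ∈ S := by
    refine ⟨interlaces_and_interlaces_fin_three h01 (by linarith) ⟨le_rfl, h01⟩ ⟨le_rfl, h12⟩, ?_⟩
    simp only [Fin.sum_univ_three, b, cons_val]
    ring
  obtain ⟨d, hd, hd0⟩ := hconvex.isPreconnected.intermediate_value ha hb hcont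
    (show (0 : ℝ) ∈ Set.Icc (w 0 a - (w 1 a + w 2 a)) (w 0 b - (w 1 b + w 2 b)) from
      ⟨by linarith [hw 0 a rfl, hw0 1 a, hw0 2 a],
        by linarith [hw0 0 b, hw 1 b rfl, hw 2 b rfl]⟩)
  exact ⟨d, hd.1.1, hd.1.2, hd.2, sub_eq_zero.mp hd0⟩

end InterlacingPolytope

section HornThree

variable {p q c : Fin 3 → ℝ}

lemma exists_orthogonal_residue_vectors {p e : Fin 3 → ℝ} {T : ℝ}
    (h01 : (p ⊔ e) 1 ≤ (p ⊓ e) 0) (h12 : (p ⊔ e) 2 ≤ (p ⊓ e) 1) (hne : ∀ i j, i < j → p i ≠ e i)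
    (hlow : (p ⊔ e) 0 + (p ⊔ e) 1 + (p ⊔ e) 2 ≤ T)
    (hup : T ≤ (p ⊔ e) 0 + (p ⊓ e) 0 + (p ⊓ e) 1) :
    ∃ d u v : Fin 3 → ℝ, Function.Injective d ∧ ∑ i, d i = T ∧ (∀ i, u i ^ 2 = residue d p i) ∧
      (∀ i, v i ^ 2 = residue d e i) ∧ u ⬝ᵥ v = 0 := by
  obtain ⟨d, hdp, hde, hsum, hd⟩ := exists_interlacing_sum_eq h01 h12 hne hlow hup
  have hp := residue_nonneg hdp
  have he := residue_nonneg hde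
  refine ⟨d, fun i => √(residue d p i), fun i => ![1, -1, -1] i * √(residue d e i),
    (strictAnti_of_interlaces_of_ne hdp hde hne).injective, hsum, fun i => Real.sq_sqrt (hp i),
    fun i => ?_, ?_⟩
  · rw [mul_pow, Real.sq_sqrt (he i)]
    fin_cases i <;> simp
  · simp only [Real.sqrt_mul (hp _)] at hd
    simp only [dotProduct, Fin.sum_univ_three, cons_val]
    linear_combination hd

lemma charpoly_scalar_sub_rankOne_add_rankOne {u v : Fin 3 → ℝ} (huv : u ⬝ᵥ v = 0) (a : ℝ) :
    (diagonal (fun _ => (a : ℂ)) - rankOne u + rankOne v).charpoly =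
      polyOfRoots ![a + ∑ i, v i ^ 2, a, a - ∑ i, u i ^ 2] := by
  refine Polynomial.funext fun r => ?_
  replace huv := congrArg ((↑) : ℝ → ℂ) huv
  simp only [dotProduct, Fin.sum_univ_three, Complex.ofReal_add, Complex.ofReal_mul,
    Complex.ofReal_zero] at huv
  simp [polyOfRoots, rankOne, eval_charpoly, det_fin_three, scalar_apply, vecMulVec_apply,
    Fin.prod_univ_three, Fin.sum_univ_three]
  linear_combination (r - a) * (u 0 * v 0 + u 1 * v 1 + u 2 * v 2) * huv

lemma isHermitian_rankOne {ι : Type*} (u : ι → ℝ) : (rankOne u).IsHermitian := by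
  ext i j
  simp [rankOne, vecMulVec_apply, mul_comm]

lemma exists_residue_vectors_of_hornIneqs (hp : Antitone p) (hq : Antitone q) (hc : Antitone c)
    (h : HornIneqs p q c) (htrace : ∑ i, p i = ∑ i, c i + ∑ i, q i) (h0 : p 0 ≠ c 0 + q 1)
    (h1 : p 1 ≠ c 1 + q 1) :
    ∃ d u v : Fin 3 → ℝ, Function.Injective d ∧ ∑ i, d i = ∑ i, p i + q 1 - q 2 ∧
      (∀ i, u i ^ 2 = residue d p i) ∧ (∀ i, v i ^ 2 = residue d (fun j => c j + q 1) i) ∧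
      u ⬝ᵥ v = 0 := by
  obtain ⟨_, _, _, _, _, _, _, _, _, _, _, _, _⟩ := (hornIneqs_iff p q c).mp h
  have hp01 : p 1 ≤ p 0 := hp (by decide)
  have hp12 : p 2 ≤ p 1 := hp (by decide)
  have hq01 : q 1 ≤ q 0 := hq (by decide)
  have hq12 : q 2 ≤ q 1 := hq (by decide)
  have hc01 : c 1 ≤ c 0 := hc (by decide)
  have hc12 : c 2 ≤ c 1 := hc (by decide)
  simp only [Fin.sum_univ_three] at htrace
  refine exists_orthogonal_residue_vectors ?_ ?_ ?_ ?_ ?_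
  · exact sup_le (le_inf hp01 (by linarith)) (le_inf (by linarith) (by linarith))
  · exact sup_le (le_inf hp12 (by linarith)) (le_inf (by linarith) (by linarith))
  · intro i j hij
    fin_cases i
    exacts [h0, h1, absurd hij (by fin_cases j <;> decide)]
  · simp only [Pi.sup_apply, Fin.sum_univ_three]
    rcases max_choice (p 0) (c 0 + q 1) with h0 | h0 <;>
      rcases max_choice (p 1) (c 1 + q 1) with h1 | h1 <;>
      rcases max_choice (p 2) (c 2 + q 1) with h2 | h2 <;> rw [h0, h1, h2] <;> linarith
  · rw [Pi.sup_apply, Pi.inf_apply, Pi.inf_apply, Fin.sum_univ_three, max_add_min]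
    rcases min_choice (p 1) (c 1 + q 1) with h1 | h1 <;> rw [h1] <;> linarith

-- `P = D - uuᵀ` and `Q = q₁ - uuᵀ + vvᵀ` have difference `(D - q₁) - vvᵀ`.
lemma mem_Horn_of_ne (hp : Antitone p) (hq : Antitone q) (hc : Antitone c) (h : HornIneqs p q c)
    (htrace : ∑ i, p i = ∑ i, c i + ∑ i, q i) (h0 : p 0 ≠ c 0 + q 1) (h1 : p 1 ≠ c 1 + q 1) :
    (c, q, p) ∈ Horn 3 := by
  obtain ⟨d, u, v, hd, hsum, hu, hv, huv⟩ :=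
    exists_residue_vectors_of_hornIneqs hp hq hc h htrace h0 h1
  have hu2 : ∑ i, u i ^ 2 = q 1 - q 2 := by linarith [sum_sq_eq_of_residue hd hu]
  have hv2 : ∑ i, v i ^ 2 = q 0 - q 1 := by
    have := sum_sq_eq_of_residue hd hv
    simp only [Fin.sum_univ_three] at this htrace hsum ⊢
    linarith
  have hC : (diagonal (fun i => ((d i - q 1 : ℝ) : ℂ)) - rankOne v).charpoly = polyOfRoots c :=
    charpoly_diagonal_sub_rankOne (sub_left_injective.comp hd) fun i =>
      (hv i).trans (residue_sub_const d c (q 1) i).symm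
  have hQ : (diagonal (fun _ => (q 1 : ℂ)) - rankOne u + rankOne v).charpoly = polyOfRoots q := by
    rw [charpoly_scalar_sub_rankOne_add_rankOne huv, hu2, hv2]
    congr 1
    ext i
    fin_cases i <;> simp
  have hP : (diagonal (fun i => ((d i - q 1 : ℝ) : ℂ)) - rankOne v +
      (diagonal (fun _ => (q 1 : ℂ)) - rankOne u + rankOne v)).charpoly = polyOfRoots p := by
    rw [← charpoly_diagonal_sub_rankOne hd hu]
    congr 1
    ext i j
    rcases eq_or_ne i j with rfl | hij
    · simp
    · simp [hij]
  exact mem_Horn_of_charpoly ((isHermitian_diagonal_ofReal _).sub (isHermitian_rankOne v))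
    (((isHermitian_diagonal_ofReal _).sub (isHermitian_rankOne u)).add (isHermitian_rankOne v))
    hc hq hp hC hQ hP

end HornThree

section HornClosed

lemma isCompact_unitaryGroup (n : Type*) [Fintype n] [DecidableEq n] :
    IsCompact (unitaryGroup n ℂ : Set (Matrix n n ℂ)) := by
  refine (isCompact_univ_pi fun _ : n => isCompact_univ_pi fun _ : n =>
    isCompact_closedBall (0 : ℂ) 1).of_isClosed_subset
      (isClosed_unitary (R := Matrix n n ℂ)) fun U hU i _ j _ => ?_
  simpa only [mem_closedBall_zero_iff] using entry_norm_bound_of_unitary hU i j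

lemma mem_Horn_iff_exists_unitaryGroup {k : ℕ} {x y z : Fin k → ℝ} : (x, y, z) ∈ Horn k ↔
    (Antitone x ∧ Antitone y ∧ Antitone z) ∧ ∃ U V : unitaryGroup (Fin k) ℂ,
      (U.1 * diagonal (fun i => (x i : ℂ)) * U.1ᴴ +
        V.1 * diagonal (fun i => (y i : ℂ)) * V.1ᴴ).charpoly = polyOfRoots z := by
  constructor
  · rintro ⟨X, Y, hX, hY, h1, h2, h3⟩
    obtain rfl : x = _ := h1
    obtain rfl : y = _ := h2
    obtain rfl : z = _ := h3
    obtain ⟨U, hU, hXU⟩ := exists_unitary_eigVec hX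
    obtain ⟨V, hV, hYV⟩ := exists_unitary_eigVec hY
    refine ⟨⟨eigVec_antitone hX, eigVec_antitone hY, eigVec_antitone _⟩,
      ⟨U, mem_unitaryGroup_iff'.mpr hU⟩, ⟨V, mem_unitaryGroup_iff'.mpr hV⟩, ?_⟩
    rw [← hXU, ← hYV, charpoly_eq_polyOfRoots_eigVec]
  · rintro ⟨⟨hx, hy, hz⟩, U, V, h⟩
    have hherm (W : unitaryGroup (Fin k) ℂ) (w : Fin k → ℝ) :
        (W.1 * diagonal (fun i => (w i : ℂ)) * W.1ᴴ).IsHermitian :=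
      isHermitian_mul_mul_conjTranspose _ (isHermitian_diagonal_ofReal w)
    have hcharpoly (W : unitaryGroup (Fin k) ℂ) (w : Fin k → ℝ) :
        (W.1 * diagonal (fun i => (w i : ℂ)) * W.1ᴴ).charpoly = polyOfRoots w := by
      rw [charpoly_mul_comm, ← Matrix.mul_assoc, ← star_eq_conjTranspose,
        mem_unitaryGroup_iff'.mp W.2, Matrix.one_mul, charpoly_diagonal_ofReal]
    exact mem_Horn_of_charpoly (hherm U x) (hherm V y) hx hy hz (hcharpoly U x) (hcharpoly V y) h

lemma isClosed_setOf_charpoly_eq_polyOfRoots {α ι : Type*} [TopologicalSpace α] [Fintype ι]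
    [DecidableEq ι] {M : α → Matrix ι ι ℂ} {l : α → ι → ℝ} (hM : Continuous M) (hl : Continuous l) :
    IsClosed {a | (M a).charpoly = polyOfRoots (l a)} := by
  have heval : {a | (M a).charpoly = polyOfRoots (l a)} =
      ⋂ r : ℂ, {a | (scalar ι r - M a).det = ∏ i, (r - (l a i : ℂ))} := by
    ext a
    simp only [Set.mem_ofPred_eq, Set.mem_iInter, ← eval_charpoly]
    refine ⟨fun h r => ?_, fun h => Polynomial.funext fun r => ?_⟩ <;>
      simp [h, polyOfRoots, Polynomial.eval_prod]
  rw [heval]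
  exact isClosed_iInter fun r => isClosed_eq (by fun_prop) (by fun_prop)

lemma isClosed_Horn (k : ℕ) : IsClosed (Horn k) := by
  have := isCompact_iff_compactSpace.mp (isCompact_unitaryGroup (Fin k))
  let S : Set ((unitaryGroup (Fin k) ℂ × unitaryGroup (Fin k) ℂ) ×
      (Fin k → ℝ) × (Fin k → ℝ) × (Fin k → ℝ)) :=
    {v | (v.1.1.1 * diagonal (fun i => (v.2.1 i : ℂ)) * v.1.1.1ᴴ +
      v.1.2.1 * diagonal (fun i => (v.2.2.1 i : ℂ)) * v.1.2.1ᴴ).charpoly = polyOfRoots v.2.2.2}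
  have hS : IsClosed S := isClosed_setOf_charpoly_eq_polyOfRoots (by fun_prop) (by fun_prop)
  have hHorn : Horn k =
      ({x | Antitone x} ×ˢ {y | Antitone y} ×ˢ {z | Antitone z}) ∩ Prod.snd '' S := by
    ext ⟨x, y, z⟩
    simp [mem_Horn_iff_exists_unitaryGroup, S]
  rw [hHorn]
  exact (isClosed_antitone.prod (isClosed_antitone.prod isClosed_antitone)).inter
    (isClosedMap_snd_of_compactSpace _ hS)

end HornClosed

section HornThreeClosure

open Filter Topology

variable {p q c p' q' c' : Fin 3 → ℝ} {ε : ℝ}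

lemma hornLeft_add (c c' : Fin 3 → ℝ) : hornLeft (c + c') = hornLeft c + hornLeft c' := by
  ext m
  fin_cases m <;> simp [hornLeft] <;> ring

lemma hornLeft_smul (ε : ℝ) (c : Fin 3 → ℝ) : hornLeft (ε • c) = ε • hornLeft c := by
  ext m
  fin_cases m <;> simp [hornLeft] <;> ring

lemma hornRight_add_smul (p p' q q' : Fin 3 → ℝ) (ε : ℝ) :
    hornRight (p + ε • p') (q + ε • q') = hornRight p q + ε • hornRight p' q' := by
  ext m
  fin_cases m <;> simp [hornRight] <;> ring

lemma HornIneqs.add_smul (h : HornIneqs p q c) (h' : HornIneqs p' q' c') (hε : 0 ≤ ε) :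
    HornIneqs (p + ε • p') (q + ε • q') (c + ε • c') := by
  rw [HornIneqs, hornLeft_add, hornLeft_smul, hornRight_add_smul]
  exact add_le_add h (smul_le_smul_of_nonneg_left h' hε)

lemma mem_Horn_of_hornIneqs (hp : Antitone p) (hq : Antitone q) (hc : Antitone c)
    (h : HornIneqs p q c) (htrace : ∑ i, p i = ∑ i, c i + ∑ i, q i) : (c, q, p) ∈ Horn 3 := by
  have hlim : Tendsto (fun ε : ℝ => (c + ε • ![2, -1, -1], q + ε • ![2, 1, 0], p + ε • ![2, 1, 0]))
      (𝓝[>] 0) (𝓝 (c, q, p)) :=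
    (Continuous.tendsto' (by fun_prop) _ _ (by simp)).mono_left nhdsWithin_le_nhds
  refine (isClosed_Horn 3).mem_of_tendsto hlim ?_
  have hpq : Antitone (![2, 1, 0] : Fin 3 → ℝ) :=
    Fin.antitone_iff_succ_le.mpr (by simp [Fin.forall_fin_succ])
  have hc' : Antitone (![2, -1, -1] : Fin 3 → ℝ) :=
    Fin.antitone_iff_succ_le.mpr (by norm_num [Fin.forall_fin_succ])
  have hdir : HornIneqs ![2, 1, 0] ![2, 1, 0] ![2, -1, -1] := by
    simp only [hornIneqs_iff, cons_val]
    norm_num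
  have hne (a : ℝ) : ∀ᶠ ε in 𝓝[>] 0, ε ≠ a :=
    ((nhdsGT_le_nhdsNE 0).trans (nhdsNE_le_cofinite 0)) (eventually_cofinite_ne a)
  filter_upwards [self_mem_nhdsWithin, hne (p 0 - c 0 - q 1), hne (c 1 + q 1 - p 1)]
    with ε (hε : 0 < ε) h0 h1
  refine mem_Horn_of_ne (hp.add (hpq.const_smul hε.le)) (hq.add (hpq.const_smul hε.le))
    (hc.add (hc'.const_smul hε.le)) (h.add_smul hdir hε.le) ?_ ?_ ?_
  · simp only [Fin.sum_univ_three, Pi.add_apply, Pi.smul_apply, smul_eq_mul, cons_val] at htrace ⊢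
    linarith
  · contrapose! h0
    simp only [Pi.add_apply, Pi.smul_apply, smul_eq_mul, cons_val] at h0
    linarith
  · contrapose! h1
    simp only [Pi.add_apply, Pi.smul_apply, smul_eq_mul, cons_val] at h1
    linarith

end HornThreeClosure

section Sufficiency

lemma isBlockCharpoly_of_tight {p q c : Fin 3 → ℝ} (hp : Antitone p) (hq : Antitone q)
    (hc : Antitone c) (hc0 : ∀ i, 0 ≤ c i) (h : HornIneqs p q c) {m : Fin 13}
    (htight : hornLeft c m = hornRight p q m) :
    IsBlockCharpoly c (polyOfRoots p * polyOfRoots q) := by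
  rcases ne_or_eq m 12 with hm | rfl
  · exact isBlockCharpoly_of_facet hc hc0 h hm htight
  · refine isBlockCharpoly_of_mem_Horn (mem_Horn_of_hornIneqs hp hq hc h ?_)
    replace htight : c 0 + c 1 + c 2 = p 0 + p 1 + p 2 - q 0 - q 1 - q 2 := htight
    simp only [Fin.sum_univ_three]
    linarith

lemma isBlockCharpoly_of_hornIneqs {p q c : Fin 3 → ℝ} (hp : Antitone p) (hq : Antitone q)
    (hc : Antitone c) (hc0 : ∀ i, 0 ≤ c i) (h : HornIneqs p q c) :
    IsBlockCharpoly c (polyOfRoots p * polyOfRoots q) := by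
  rcases (hc0 0).eq_or_lt with hzero | hpos
  · obtain rfl : c = 0 :=
      funext fun i => le_antisymm ((hc (Fin.zero_le i)).trans hzero.ge) (hc0 i)
    exact isBlockCharpoly_zero p q
  · obtain ⟨τ, hτ, hle, m, hm⟩ := exists_tight_scale h ⟨0, hpos⟩
    have hτ0 : 0 ≤ τ := zero_le_one.trans hτ
    refine IsBlockCharpoly.of_smul hτ (isBlockCharpoly_of_tight hp hq (hc.const_smul hτ0)
      (fun i => mul_nonneg hτ0 (hc0 i)) (m := m) ?_ ?_)
    · rwa [HornIneqs, hornLeft_smul]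
    · rwa [hornLeft_smul]

lemma mem_coneA_iff_hornIneqs {l : Fin (3 + 3) → ℝ} {s : Fin 3 → ℝ} (hl : Antitone l)
    (hs : Antitone s) (hs0 : ∀ i, 0 ≤ s i) : (l, s) ∈ coneA 3 3 ↔
      HornIneqs (fun i => l (Fin.castAdd 3 i)) (fun i => l (Fin.natAdd 3 i)) ((2 : ℝ) • s) := by
  refine ⟨hornIneqs_of_mem_coneA, fun h => IsBlockCharpoly.mem_coneA ?_ hl hs hs0⟩
  rw [polyOfRoots, Fin.prod_univ_add]
  exact isBlockCharpoly_of_hornIneqs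
    (hl.comp_monotone (Fin.strictMono_castAdd 3).monotone)
    (hl.comp_monotone (Fin.strictMono_natAdd 3).monotone)
    (hs.const_smul (zero_le_two (α := ℝ))) (fun i => mul_nonneg zero_le_two (hs0 i)) h

end Sufficiency

theorem stmt_5 (lam : Fin (3 + 3) → ℝ) (s : Fin 3 → ℝ)
    (h1 : lam 0 ≥ lam 1) (h2 : lam 1 ≥ lam 2) (h3 : lam 2 ≥ lam 3)
    (h4 : lam 3 ≥ lam 4) (h5 : lam 4 ≥ lam 5)
    (hs1 : s 0 ≥ s 1) (hs2 : s 1 ≥ s 2) (hs3 : s 2 ≥ 0) :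
    (lam, s) ∈ coneA 3 3 ↔
      (lam 0 - lam 5 ≥ 2 * s 0 ∧
       lam 1 - lam 5 ≥ 2 * s 1 ∧
       lam 0 - lam 4 ≥ 2 * s 1 ∧
       lam 0 - lam 3 ≥ 2 * s 2 ∧
       lam 1 - lam 4 ≥ 2 * s 2 ∧
       lam 2 - lam 5 ≥ 2 * s 2 ∧
       lam 0 + lam 1 - lam 4 - lam 5 ≥ 2 * (s 0 + s 1) ∧
       lam 0 + lam 1 - lam 3 - lam 5 ≥ 2 * (s 0 + s 2) ∧
       lam 0 + lam 2 - lam 4 - lam 5 ≥ 2 * (s 0 + s 2) ∧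
       lam 0 + lam 1 - lam 3 - lam 4 ≥ 2 * (s 1 + s 2) ∧
       lam 0 + lam 2 - lam 3 - lam 5 ≥ 2 * (s 1 + s 2) ∧
       lam 1 + lam 2 - lam 4 - lam 5 ≥ 2 * (s 1 + s 2) ∧
       lam 0 + lam 1 + lam 2 - lam 3 - lam 4 - lam 5 ≥ 2 * (s 0 + s 1 + s 2)) := by
  have hl : Antitone lam := Fin.antitone_iff_succ_le.mpr (by
    simp only [Fin.forall_fin_succ]
    exact ⟨h1, h2, h3, h4, h5, finZeroElim⟩)
  have hs : Antitone s := Fin.antitone_iff_succ_le.mpr (by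
    simp only [Fin.forall_fin_succ]
    exact ⟨hs1, hs2, finZeroElim⟩)
  rw [mem_coneA_iff_hornIneqs hl hs fun i => hs3.trans (hs (Fin.le_last i)), hornIneqs_iff]
  simp only [ge_iff_le, mul_add]
  rfl
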